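/- arXiv:2402.17795 — 3 statements merged into one kernel-verified Lean document; each statement's English description precedes it below -/
import Mathlib

section
/- Let a : ℝ → [0,1] satisfy (A1') and have √a κ-Lipschitz, and H ∈ 𝓗_sqc(α0,α1,γ,η) with γ > 2. Let λ0 := inf{μ : a u'' + H(x,u') = μ admits a continuous viscosity supersolution on ℝ}, and λ̂(x) := min_{p∈ℝ} H(x,p). Then λ0 ≥ sup_{x ∈ {a=0}} λ̂(x). -/
open Real Set Filter Topology MeasureTheory

noncomputable section

/-- The Hamiltonian class `𝓗(α₀, α₁, γ)`: growth condition (H1) and the local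
Lipschitz conditions (H2), (H3). -/
def HamClass (a0 a1 g : ℝ) (H : ℝ → ℝ → ℝ) : Prop :=
  (∀ x p : ℝ, a0 * |p| ^ g - 1 / a0 ≤ H x p) ∧
  (∀ x p : ℝ, H x p ≤ a1 * (|p| ^ g + 1)) ∧
  (∀ x p q : ℝ, |H x p - H x q| ≤ a1 * (|p| + |q| + 1) ^ (g - 1) * |p - q|) ∧
  (∀ x y p : ℝ, |H x p - H y p| ≤ a1 * (|p| ^ g + 1) * |x - y|)

/-- The strictly quasiconvex class `𝓗_sqc(α₀, α₁, γ, η)` with (unique) minimizer map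
`phat`. -/
def HamSqc (a0 a1 g eta : ℝ) (H : ℝ → ℝ → ℝ) (phat : ℝ → ℝ) : Prop :=
  HamClass a0 a1 g H ∧
  (∀ x p : ℝ, H x (phat x) ≤ H x p) ∧
  (∀ x p : ℝ, (∀ q : ℝ, H x p ≤ H x q) → p = phat x) ∧
  (∀ x p1 p2 : ℝ, p1 < p2 → p2 ≤ phat x → eta * |p1 - p2| ≤ H x p1 - H x p2) ∧
  (∀ x p1 p2 : ℝ, phat x ≤ p1 → p1 < p2 → eta * |p1 - p2| ≤ H x p2 - H x p1)

/-- A continuous `u` is a viscosity supersolution of `a(x) u'' + H(x, u') = lam` on `U`: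
at every local minimum point `x0 ∈ U` of `u - φ`, with `φ` of class `C²`, one has
`a(x0) φ''(x0) + H(x0, φ'(x0)) ≤ lam`. -/
def ViscSuperOn (a : ℝ → ℝ) (H : ℝ → ℝ → ℝ) (lam : ℝ) (U : Set ℝ) (u : ℝ → ℝ) : Prop :=
  ∀ φ : ℝ → ℝ, ContDiff ℝ 2 φ → ∀ x0 ∈ U, IsLocalMin (fun x => u x - φ x) x0 →
    a x0 * deriv (deriv φ) x0 + H x0 (deriv φ x0) ≤ lam

/-- Viscosity subsolution of `a(x) u'' + H(x, u') = lam` on `U`. -/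
def ViscSubOn (a : ℝ → ℝ) (H : ℝ → ℝ → ℝ) (lam : ℝ) (U : Set ℝ) (u : ℝ → ℝ) : Prop :=
  ∀ φ : ℝ → ℝ, ContDiff ℝ 2 φ → ∀ x0 ∈ U, IsLocalMax (fun x => u x - φ x) x0 →
    lam ≤ a x0 * deriv (deriv φ) x0 + H x0 (deriv φ x0)

/-- Viscosity solution of `a(x) u'' + H(x, u') = lam` on `U`. -/
def ViscSolOn (a : ℝ → ℝ) (H : ℝ → ℝ → ℝ) (lam : ℝ) (U : Set ℝ) (u : ℝ → ℝ) : Prop :=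
  ViscSubOn a H lam U u ∧ ViscSuperOn a H lam U u

/-- The critical value `λ₀`: the infimum of the levels `lam` at which the stationary
equation `a u'' + H(x, u') = lam` admits a continuous viscosity supersolution on `ℝ`. -/
def CriticalValue (a : ℝ → ℝ) (H : ℝ → ℝ → ℝ) : ℝ :=
  sInf {lam : ℝ | ∃ u : ℝ → ℝ, Continuous u ∧ ViscSuperOn a H lam Set.univ u}

/-- Condition (A1'): `a ≢ 0` and every connected component of `A := {a > 0}` is bounded
(components of an open subset of `ℝ` are automatically open intervals). -/
def CondA1' (a : ℝ → ℝ) : Prop :=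
  (∃ x, a x ≠ 0) ∧
  ∀ x, 0 < a x → Bornology.IsBounded (connectedComponentIn {y : ℝ | 0 < a y} x)

/-!
If a continuous `u` is penalized by `c (x - x₀)²` with `c` large, the sum attains a local minimum at
some `y` near `x₀` with `c (y - x₀)²` small. Testing the supersolution property at `y` costs the
second-order term `2 c a(y)`, and this too is small because `a` vanishes quadratically at a zero of
the Lipschitz function `√a`. Hence `λ̂(y) ≤ H(y, p) ≤ λ + o(1)` along points `y → x₀`, where `p` is
the slope of the test function, and lower semicontinuity of `λ̂` yields `λ̂(x₀) ≤ λ` at every level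
`λ` admitting a supersolution. Constants are supersolutions at a large level, so the infimum
defining `λ₀` is over a nonempty set and does not take the junk value of `sInf ∅`.
-/

open Asymptotics

theorem deriv_deriv_nonpos_of_isLocalMax {f : ℝ → ℝ} {x₀ : ℝ} (hf : ContinuousAt f x₀)
    (hmax : IsLocalMax f x₀) : deriv (deriv f) x₀ ≤ 0 := by
  by_contra! hpos
  have hmin : IsLocalMin f x₀ := isLocalMin_of_deriv_deriv_pos hpos hmax.deriv_eq_zero hf
  have hconst : f =ᶠ[𝓝 x₀] fun _ ↦ f x₀ := by
    filter_upwards [hmax, hmin] with x hle hge using le_antisymm hle hge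
  have hzero : deriv (deriv f) x₀ = 0 := by simp [hconst.deriv.deriv_eq]
  exact hpos.ne' hzero

theorem frequently_isLocalMin_add_mul_dist_sq {X : Type*} [PseudoMetricSpace X] [ProperSpace X]
    {u : X → ℝ} (hu : LowerSemicontinuous u) (x₀ : X) {ε : ℝ} (hε : 0 < ε) :
    ∃ᶠ y in 𝓝 x₀, ∃ c > 0, c * dist y x₀ ^ 2 < ε ∧
      IsLocalMin (fun x ↦ u x + c * dist x x₀ ^ 2) y := by
  refine frequently_iff.2 fun {s} hs ↦ ?_
  obtain ⟨δ, hδ, hball⟩ := Metric.nhds_basis_closedBall.mem_iff.1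
    (inter_mem hs (hu x₀ (u x₀ - ε) (sub_lt_self _ hε)))
  -- On the sphere of radius `δ` the penalty equals `ε`, which excludes a minimum there.
  obtain ⟨c, hc, hcδ⟩ : ∃ c > 0, c * δ ^ 2 = ε := ⟨ε / δ ^ 2, by positivity, by field_simp⟩
  have hlsc : LowerSemicontinuous fun x ↦ u x + c * dist x x₀ ^ 2 :=
    hu.add (Continuous.lowerSemicontinuous (by fun_prop))
  have hx₀ : x₀ ∈ Metric.closedBall x₀ δ := Metric.mem_closedBall_self hδ.le
  obtain ⟨y, hy, hmin⟩ :=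
    (hlsc.lowerSemicontinuousOn _).exists_isMinOn ⟨x₀, hx₀⟩ (isCompact_closedBall x₀ δ)
  have hle : u y + c * dist y x₀ ^ 2 ≤ u x₀ := by simpa using hmin hx₀
  have hlower : u x₀ - ε < u y := (hball hy).2
  have hpenalty : c * dist y x₀ ^ 2 < ε := by linarith
  have hdist : dist y x₀ < δ :=
    lt_of_pow_lt_pow_left₀ 2 hδ.le (lt_of_mul_lt_mul_left (hpenalty.trans_eq hcδ.symm) hc.le)
  exact ⟨y, (hball hy).1, c, hc, hpenalty,
    hmin.isLocalMin (Metric.closedBall_mem_nhds_of_mem hdist)⟩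

theorem isBigO_sq_of_sqrt_lipschitz {a : ℝ → ℝ} {κ x₀ : ℝ} (ha : ∀ x, 0 ≤ a x)
    (hsqrt : ∀ x, |√(a x) - √(a x₀)| ≤ κ * |x - x₀|) (hx₀ : a x₀ = 0) :
    a =O[𝓝 x₀] fun x ↦ (x - x₀) ^ 2 := by
  have hbound : (fun x ↦ √(a x)) =O[𝓝 x₀] fun x ↦ x - x₀ :=
    .of_bound κ (.of_forall fun x ↦ by simpa [hx₀] using hsqrt x)
  exact (hbound.pow 2).congr_left fun x ↦ Real.sq_sqrt (ha x)

theorem lowerSemicontinuous_iInf_of_coercive {X ι : Type*} [PseudoMetricSpace X] [Nonempty ι]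
    {H : X → ι → ℝ} {w : ι → ℝ} {α₀ α₁ β : ℝ} (hα₀ : 0 < α₀) (hα₁ : 0 ≤ α₁)
    (hbdd : ∀ x, BddBelow (range (H x))) (hcoercive : ∀ x p, α₀ * w p - β ≤ H x p)
    (hlip : ∀ x y p, |H x p - H y p| ≤ α₁ * (w p + 1) * dist x y) :
    LowerSemicontinuous fun x ↦ ⨅ p, H x p := by
  intro x μ hμ
  obtain ⟨ν, hμν, hν⟩ := exists_between hμ
  have hnear : ∀ᶠ y in 𝓝 x, ν + α₁ * ((ν + β) / α₀ + 1) * dist x y < ⨅ p, H x p := by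
    have hcont : Continuous fun y ↦ ν + α₁ * ((ν + β) / α₀ + 1) * dist x y := by fun_prop
    exact hcont.continuousAt.eventually_lt_const (by simpa using hν)
  filter_upwards [hnear] with y hy
  refine hμν.trans_le (le_ciInf fun p ↦ ?_)
  by_contra! hp
  -- Coercivity bounds the weight on the sublevel set `{H y · < ν}`, making `hlip` uniform there.
  have hweight : w p ≤ (ν + β) / α₀ := by
    rw [le_div_iff₀ hα₀]
    linarith [hcoercive y p]
  have hinf : ⨅ p, H x p < ⨅ p, H x p := calc
    ⨅ p, H x p ≤ H x p := ciInf_le (hbdd x) p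
    _ ≤ H y p + α₁ * (w p + 1) * dist x y := by linarith [(abs_le.1 (hlip x y p)).2]
    _ ≤ ν + α₁ * ((ν + β) / α₀ + 1) * dist x y := by gcongr
    _ < ⨅ p, H x p := hy
  exact hinf.false

namespace HamClass

variable {α₀ α₁ γ : ℝ} {H : ℝ → ℝ → ℝ}

theorem bddBelow_range (hH : HamClass α₀ α₁ γ H) (hα₀ : 0 < α₀) (x : ℝ) :
    BddBelow (range (H x)) := by
  refine ⟨-(1 / α₀), forall_mem_range.2 fun p ↦ ?_⟩
  have hpow : 0 ≤ α₀ * |p| ^ γ := by positivity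
  linarith [hH.1 x p]

theorem bddAbove_range_zero (hH : HamClass α₀ α₁ γ H) : BddAbove (range fun x ↦ H x 0) :=
  ⟨_, forall_mem_range.2 (hH.2.1 · 0)⟩

theorem lowerSemicontinuous_iInf (hH : HamClass α₀ α₁ γ H) (hα₀ : 0 < α₀) (hα₁ : 0 ≤ α₁) :
    LowerSemicontinuous fun x ↦ ⨅ p, H x p :=
  lowerSemicontinuous_iInf_of_coercive hα₀ hα₁ (hH.bddBelow_range hα₀) hH.1 hH.2.2.2

end HamClass

namespace ViscSuperOn

variable {a : ℝ → ℝ} {H : ℝ → ℝ → ℝ} {lam x₀ : ℝ} {U : Set ℝ} {u : ℝ → ℝ}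

theorem const {M : ℝ} (ha : ∀ x ∈ U, 0 ≤ a x) (hM : ∀ x ∈ U, H x 0 ≤ M) (C : ℝ) :
    ViscSuperOn a H M U fun _ ↦ C := by
  intro φ hφ x hx hmin
  have hmax : IsLocalMax φ x := by
    filter_upwards [hmin] with y hy using (sub_le_sub_iff_left C).1 hy
  have hsecond : a x * deriv (deriv φ) x ≤ 0 := mul_nonpos_of_nonneg_of_nonpos (ha x hx)
    (deriv_deriv_nonpos_of_isLocalMax hφ.continuous.continuousAt hmax)
  rw [hmax.deriv_eq_zero]
  linarith [hM x hx]

theorem le_of_isLocalMin_add_mul_sq (hs : ViscSuperOn a H lam U u) {c y : ℝ} (hy : y ∈ U)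
    (hmin : IsLocalMin (fun x ↦ u x + c * (x - x₀) ^ 2) y) :
    H y (-(2 * c * (y - x₀))) ≤ lam + 2 * c * a y := by
  have hderiv : deriv (fun x ↦ -(c * (x - x₀) ^ 2)) = fun x ↦ -(2 * c * (x - x₀)) := by
    funext x
    have hsq : HasDerivAt (fun z ↦ (z - x₀) ^ 2) (2 * (x - x₀)) x := by
      simpa using ((hasDerivAt_id' x).sub_const x₀).fun_pow 2
    exact ((hsq.const_mul c).fun_neg.congr_deriv (by ring)).deriv
  have hderiv₂ : deriv (fun x ↦ -(2 * c * (x - x₀))) y = -(2 * c) := by simp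
  have htest := hs (fun x ↦ -(c * (x - x₀) ^ 2)) (by fun_prop) y hy (by simpa using hmin)
  rw [hderiv, hderiv₂] at htest
  linarith

theorem frequently_exists_lt (hs : ViscSuperOn a H lam U u) (hu : LowerSemicontinuous u)
    (hU : U ∈ 𝓝 x₀) (ha : a =O[𝓝 x₀] fun x ↦ (x - x₀) ^ 2) {μ : ℝ} (hμ : lam < μ) :
    ∃ᶠ y in 𝓝 x₀, ∃ p, H y p < μ := by
  obtain ⟨K, hK, haK⟩ := ha.exists_pos
  have hε : 0 < (μ - lam) / (2 * K) := div_pos (sub_pos.2 hμ) (by positivity)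
  refine ((frequently_isLocalMin_add_mul_dist_sq hu x₀ hε).and_eventually
    (haK.bound.and hU)).mono ?_
  rintro y ⟨⟨c, hc, hpenalty, hmin⟩, hay, hyU⟩
  simp only [Real.dist_eq, sq_abs] at hpenalty hmin
  have hay' : a y ≤ K * (y - x₀) ^ 2 := by simpa using (le_abs_self _).trans hay
  refine ⟨-(2 * c * (y - x₀)), ?_⟩
  calc H y (-(2 * c * (y - x₀))) ≤ lam + 2 * c * a y := hs.le_of_isLocalMin_add_mul_sq hyU hmin
    _ ≤ lam + 2 * c * (K * (y - x₀) ^ 2) := by gcongr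
    _ = lam + c * (y - x₀) ^ 2 * (2 * K) := by ring
    _ < lam + (μ - lam) := by
      gcongr
      exact (lt_div_iff₀ (by positivity)).1 hpenalty
    _ = μ := by ring

theorem iInf_le (hs : ViscSuperOn a H lam U u) (hu : LowerSemicontinuous u) (hU : U ∈ 𝓝 x₀)
    (ha : a =O[𝓝 x₀] fun x ↦ (x - x₀) ^ 2) (hbdd : ∀ x, BddBelow (range (H x)))
    (hlsc : LowerSemicontinuousAt (fun x ↦ ⨅ p, H x p) x₀) :
    ⨅ p, H x₀ p ≤ lam := by
  by_contra! hlt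
  obtain ⟨μ, hlamμ, hμ⟩ := exists_between hlt
  obtain ⟨y, ⟨p, hp⟩, hy⟩ :=
    ((hs.frequently_exists_lt hu hU ha hlamμ).and_eventually (hlsc μ hμ)).exists
  exact (hy.trans_le (ciInf_le (hbdd y) p)).not_gt hp

end ViscSuperOn

theorem statement_12_general {a : ℝ → ℝ} {H : ℝ → ℝ → ℝ} {x₀ : ℝ}
    (ha : ∀ x, 0 ≤ a x) (ha₀ : a =O[𝓝 x₀] fun x ↦ (x - x₀) ^ 2)
    (hbelow : ∀ x, BddBelow (range (H x))) (habove : BddAbove (range fun x ↦ H x 0))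
    (hlsc : LowerSemicontinuousAt (fun x ↦ ⨅ p, H x p) x₀) :
    ⨅ p, H x₀ p ≤ CriticalValue a H := by
  obtain ⟨M, hM⟩ := habove
  refine le_csInf ⟨M, fun _ ↦ 0, continuous_const, ?_⟩ ?_
  · exact .const (fun x _ ↦ ha x) (fun x _ ↦ hM (mem_range_self x)) 0
  · rintro lam ⟨u, hu, hs⟩
    exact hs.iInf_le hu.lowerSemicontinuous univ_mem ha₀ hbelow hlsc

/-- Proposition `appC prop lambda 0`: `λ₀ ≥ sup_{x ∈ {a=0}} λ̂(x)`,
i.e. the critical value dominates `λ̂(x) = H(x, p̂(x))` at every zero of the diffusion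
coefficient. -/
theorem statement_12
    (a : ℝ → ℝ) (H : ℝ → ℝ → ℝ) (phat : ℝ → ℝ)
    (κ α0 α1 γ η : ℝ)
    (harange : ∀ x, a x ∈ Set.Icc (0:ℝ) 1)
    (hκ : 0 < κ) (hA2 : ∀ x y : ℝ, |Real.sqrt (a x) - Real.sqrt (a y)| ≤ κ * |x - y|)
    (hA1' : CondA1' a)
    (hα0 : 0 < α0) (hα1 : 0 < α1) (hγ : 2 < γ) (hη : 0 < η)
    (hH : HamSqc α0 α1 γ η H phat)
    (lam0 : ℝ) (hlam0 : lam0 = CriticalValue a H) :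
    ∀ x : ℝ, a x = 0 → H x (phat x) ≤ lam0 := by
  intro x hx
  have ha (y : ℝ) : 0 ≤ a y := (harange y).1
  exact hlam0 ▸ (le_ciInf (hH.2.1 x)).trans (statement_12_general ha
    (isBigO_sq_of_sqrt_lipschitz ha (hA2 · x) hx) (hH.1.bddBelow_range hα0)
    hH.1.bddAbove_range_zero (hH.1.lowerSemicontinuous_iInf hα0 hα1.le x))
end
end

section
/- Let a : ℝ → [0,1] satisfy (A1') and have √a κ-Lipschitz, and H ∈ 𝓗_sqc(α0,α1,γ,η) with γ > 2. Let λ ≥ sup_{x∈{a=0}} λ̂(x). Then the functions p⁻_λ, p⁺_λ : {a=0} → ℝ are well defined, bounded and Lipschitz continuous: there exist a constant K̃_λ = K̃(α0,γ,λ) depending only on α0 > 0, γ > 2 and λ, and a constant κ̃_λ = κ̃(K̃_λ,α1,γ,η), also depending on α1 > 0 and η > 0, such that |p^±_λ(x)| ≤ K̃_λ and |p^±_λ(x) − p^±_λ(y)| ≤ κ̃_λ|x−y| for all x, y ∈ {a=0}. -/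
open Real Set Filter Topology MeasureTheory

noncomputable section

/-!
Away from its minimizer, `H(x, ·)` grows with slope at least `η`, so raising the level `λ` by `δ`
moves the endpoints of the sublevel set outwards by at most `δ / η`. By (H3), the sublevel set at
`y` is contained in the one at `x` for the level `λ + C |x - y|`, where `C = α₁ (K ^ γ + 1)` and `K`
bounds the sublevel sets. Exchanging `x` and `y` gives the Lipschitz constant `C / η`; the bound `K`
comes from the coercivity in (H1).
-/

/-- `h` decreases up to `p₀` and increases after `p₀`, with slope at least `η` in absolute value:
the quantitative strict quasiconvexity of `H(x, ·)` at a fixed `x`, with `p₀ = p̂(x)`. -/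
structure StrictQuasiconvexWith (η p₀ : ℝ) (h : ℝ → ℝ) : Prop where
  left : ∀ ⦃p q⦄, p ≤ q → q ≤ p₀ → η * (q - p) ≤ h p - h q
  right : ∀ ⦃p q⦄, p₀ ≤ p → p ≤ q → η * (q - p) ≤ h q - h p

namespace StrictQuasiconvexWith

variable {η p₀ lam : ℝ} {h : ℝ → ℝ}

theorem mul_abs_sub_le (hh : StrictQuasiconvexWith η p₀ h) (p : ℝ) :
    η * |p - p₀| ≤ h p - h p₀ := by
  rcases le_total p p₀ with hp | hp
  · rw [abs_sub_comm, abs_of_nonneg (sub_nonneg.2 hp)]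
    exact hh.left hp le_rfl
  · rw [abs_of_nonneg (sub_nonneg.2 hp)]
    exact hh.right le_rfl hp

theorem sublevel_subset_closedBall (hη : 0 < η) (hh : StrictQuasiconvexWith η p₀ h) :
    {p | h p ≤ lam} ⊆ Metric.closedBall p₀ ((lam - h p₀) / η) := by
  intro p (hp : h p ≤ lam)
  rw [Metric.mem_closedBall, Real.dist_eq, le_div_iff₀' hη]
  linarith [hh.mul_abs_sub_le p]

theorem antitoneOn_Iic (hη : 0 ≤ η) (hh : StrictQuasiconvexWith η p₀ h) :
    AntitoneOn h (Iic p₀) := fun _ _ _ hq hpq =>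
  sub_nonneg.1 ((mul_nonneg hη (sub_nonneg.2 hpq)).trans (hh.left hpq hq))

theorem monotoneOn_Ici (hη : 0 ≤ η) (hh : StrictQuasiconvexWith η p₀ h) :
    MonotoneOn h (Ici p₀) := fun _ hp _ _ hpq =>
  sub_nonneg.1 ((mul_nonneg hη (sub_nonneg.2 hpq)).trans (hh.right hp hpq))

theorem ordConnected_sublevel (hη : 0 ≤ η) (hh : StrictQuasiconvexWith η p₀ h) :
    OrdConnected {p | h p ≤ lam} := by
  refine ⟨fun p (hp : h p ≤ lam) r (hr : h r ≤ lam) q ⟨hpq, hqr⟩ => ?_⟩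
  rcases le_total q p₀ with hq | hq
  · exact (hh.antitoneOn_Iic hη (hpq.trans hq) hq hpq).trans hp
  · exact (hh.monotoneOn_Ici hη hq (hq.trans hqr) hqr).trans hr

theorem sublevel_eq_Icc (hη : 0 < η) (hh : StrictQuasiconvexWith η p₀ h) (hcont : Continuous h)
    (hlam : h p₀ ≤ lam) :
    {p | h p ≤ lam} = Icc (sInf {p | h p ≤ lam}) (sSup {p | h p ≤ lam}) :=
  eq_Icc_of_connected_compact
    ⟨⟨p₀, hlam⟩, (hh.ordConnected_sublevel hη.le).isPreconnected⟩
    ((isCompact_closedBall _ _).of_isClosed_subset (isClosed_le hcont continuous_const)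
      (hh.sublevel_subset_closedBall hη))

theorem sublevel_add_subset_Icc {δ m r : ℝ} (hη : 0 < η) (hh : StrictQuasiconvexWith η p₀ h)
    (hlam : h p₀ ≤ lam) (hδ : 0 ≤ δ) (hsub : {p | h p ≤ lam} ⊆ Icc m r) :
    {p | h p ≤ lam + δ} ⊆ Icc (m - δ / η) (r + δ / η) := by
  intro p (hp : h p ≤ lam + δ)
  have hstep : 0 ≤ δ / η := div_nonneg hδ hη.le
  have hηstep : η * (δ / η) = δ := mul_div_cancel₀ δ hη.ne'
  obtain ⟨hm, hr⟩ : p₀ ∈ Icc m r := hsub hlam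
  -- A point beyond the bound, moved back by `δ / η`, would stay outside `Icc m r`
  -- but have value at most `lam`.
  constructor
  · by_contra! hlt
    have hslope := hh.left (p := p) (q := p + δ / η) (by linarith) (by linarith)
    have hmem := hsub (show h (p + δ / η) ≤ lam by linarith)
    linarith [hmem.1]
  · by_contra! hlt
    have hslope := hh.right (p := p - δ / η) (q := p) (by linarith) (by linarith)
    have hmem := hsub (show h (p - δ / η) ≤ lam by linarith)
    linarith [hmem.2]

theorem abs_sub_endpoints_le {p₁ p₂ m₁ m₂ r₁ r₂ δ : ℝ} {h₁ h₂ : ℝ → ℝ} (hη : 0 < η)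
    (hh₁ : StrictQuasiconvexWith η p₁ h₁) (hh₂ : StrictQuasiconvexWith η p₂ h₂)
    (hlam₁ : h₁ p₁ ≤ lam) (hlam₂ : h₂ p₂ ≤ lam)
    (hIcc₁ : {p | h₁ p ≤ lam} = Icc m₁ r₁) (hIcc₂ : {p | h₂ p ≤ lam} = Icc m₂ r₂) (hδ : 0 ≤ δ)
    (hclose : ∀ p ∈ Icc m₁ r₁ ∪ Icc m₂ r₂, |h₁ p - h₂ p| ≤ δ) :
    |m₁ - m₂| ≤ δ / η ∧ |r₁ - r₂| ≤ δ / η := by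
  have hle₁ : m₁ ≤ r₁ := nonempty_Icc.1 (hIcc₁ ▸ ⟨p₁, hlam₁⟩)
  have hle₂ : m₂ ≤ r₂ := nonempty_Icc.1 (hIcc₂ ▸ ⟨p₂, hlam₂⟩)
  have hsub₁ : Icc m₁ r₁ ⊆ Icc (m₂ - δ / η) (r₂ + δ / η) := fun p hp =>
    hh₂.sublevel_add_subset_Icc hη hlam₂ hδ hIcc₂.subset <| by
      have hval : h₁ p ≤ lam := hIcc₁.superset hp
      exact (by linarith [(abs_le.1 (hclose p (.inl hp))).1] : h₂ p ≤ lam + δ)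
  have hsub₂ : Icc m₂ r₂ ⊆ Icc (m₁ - δ / η) (r₁ + δ / η) := fun p hp =>
    hh₁.sublevel_add_subset_Icc hη hlam₁ hδ hIcc₁.subset <| by
      have hval : h₂ p ≤ lam := hIcc₂.superset hp
      exact (by linarith [(abs_le.1 (hclose p (.inr hp))).2] : h₁ p ≤ lam + δ)
  obtain ⟨hm₁, hr₁⟩ := (Icc_subset_Icc_iff hle₁).1 hsub₁
  obtain ⟨hm₂, hr₂⟩ := (Icc_subset_Icc_iff hle₂).1 hsub₂
  exact ⟨abs_le.2 ⟨by linarith, by linarith⟩, abs_le.2 ⟨by linarith, by linarith⟩⟩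

end StrictQuasiconvexWith

theorem le_rpow_inv_of_mul_rpow_sub_le {c d t γ lam : ℝ} (hc : 0 < c) (ht : 0 ≤ t) (hγ : 0 < γ)
    (h : c * t ^ γ - d ≤ lam) : t ≤ ((lam + d) / c) ^ γ⁻¹ := by
  have hpow : t ^ γ ≤ (lam + d) / c := by
    rw [le_div_iff₀' hc]
    linarith
  exact (Real.le_rpow_inv_iff_of_pos ht ((Real.rpow_nonneg ht γ).trans hpow) hγ).2 hpow

/-- The paper's `p⁻_λ(x)`, the left endpoint of `{p | H x p ≤ lam}`. It has a junk value when that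
sublevel set is empty, that is, when `lam < λ̂(x)`. -/
def pMinus (H : ℝ → ℝ → ℝ) (lam x : ℝ) : ℝ := sInf {p | H x p ≤ lam}

/-- The paper's `p⁺_λ(x)`, the right endpoint of `{p | H x p ≤ lam}`. It has a junk value when that
sublevel set is empty, that is, when `lam < λ̂(x)`. -/
def pPlus (H : ℝ → ℝ → ℝ) (lam x : ℝ) : ℝ := sSup {p | H x p ≤ lam}

/-- The paper's `K̃(α₀, γ, λ)`: the radius for which (H1) forces `H x p > lam` whenever `|p|`
exceeds it. -/
def sublevelRadius (α0 γ lam : ℝ) : ℝ := ((lam + 1 / α0) / α0) ^ γ⁻¹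

/-- The paper's `κ̃(K, α₁, γ, η)`: the Lipschitz constant of `H` in `x` on `|p| ≤ K`, divided by the
minimal slope `η` in `p`. -/
def endpointLipschitzConst (K α1 γ η : ℝ) : ℝ := α1 * (K ^ γ + 1) / η

namespace HamClass

variable {α0 α1 γ lam : ℝ} {H : ℝ → ℝ → ℝ}

theorem continuous (hH : HamClass α0 α1 γ H) (x : ℝ) : Continuous (H x) := by
  obtain ⟨-, -, hLip, -⟩ := hH
  refine continuous_iff_continuousAt.2 fun p => tendsto_iff_dist_tendsto_zero.2 ?_
  have hmajorant : Continuous fun q : ℝ => α1 * (|q| + |p| + 1) ^ (γ - 1) * |q - p| := by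
    have hbase : Continuous fun q : ℝ => (|q| + |p| + 1) ^ (γ - 1) :=
      Continuous.rpow_const (by fun_prop) fun q => Or.inl (by positivity)
    fun_prop
  refine squeeze_zero (fun _ => dist_nonneg) (fun q => hLip x q p) ?_
  simpa using hmajorant.tendsto p

theorem abs_le_sublevelRadius (hα0 : 0 < α0) (hγ : 0 < γ) (hH : HamClass α0 α1 γ H) {x p : ℝ}
    (hp : H x p ≤ lam) : |p| ≤ sublevelRadius α0 γ lam :=
  le_rpow_inv_of_mul_rpow_sub_le hα0 (abs_nonneg p) hγ ((hH.1 x p).trans hp)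

theorem abs_sub_le_of_abs_le (hα1 : 0 ≤ α1) (hγ : 0 ≤ γ) (hH : HamClass α0 α1 γ H) {K p : ℝ}
    (hp : |p| ≤ K) (x y : ℝ) : |H x p - H y p| ≤ α1 * (K ^ γ + 1) * |x - y| := by
  refine (hH.2.2.2 x y p).trans ?_
  gcongr

end HamClass

namespace HamSqc

variable {α0 α1 γ η lam : ℝ} {H : ℝ → ℝ → ℝ} {phat : ℝ → ℝ}

theorem strictQuasiconvexWith (hH : HamSqc α0 α1 γ η H phat) (x : ℝ) :
    StrictQuasiconvexWith η (phat x) (H x) := by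
  obtain ⟨-, -, -, hleft, hright⟩ := hH
  constructor
  · intro p q hpq hq
    rcases hpq.eq_or_lt with rfl | hlt
    · simp
    · simpa [abs_sub_comm p q, abs_of_pos (sub_pos.2 hlt)] using hleft x p q hlt hq
  · intro p q hp hpq
    rcases hpq.eq_or_lt with rfl | hlt
    · simp
    · simpa [abs_sub_comm p q, abs_of_pos (sub_pos.2 hlt)] using hright x p q hp hlt

theorem sublevel_eq_Icc (hη : 0 < η) (hH : HamSqc α0 α1 γ η H phat) {x : ℝ}
    (hx : H x (phat x) ≤ lam) : {p | H x p ≤ lam} = Icc (pMinus H lam x) (pPlus H lam x) :=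
  (hH.strictQuasiconvexWith x).sublevel_eq_Icc hη (hH.1.continuous x) hx

theorem abs_endpoints_le (hα0 : 0 < α0) (hγ : 0 < γ) (hη : 0 < η)
    (hH : HamSqc α0 α1 γ η H phat) {x : ℝ} (hx : H x (phat x) ≤ lam) :
    |pMinus H lam x| ≤ sublevelRadius α0 γ lam ∧ |pPlus H lam x| ≤ sublevelRadius α0 γ lam := by
  have hIcc := hH.sublevel_eq_Icc hη hx
  have hle : pMinus H lam x ≤ pPlus H lam x := nonempty_Icc.1 (hIcc ▸ ⟨phat x, hx⟩)
  exact ⟨hH.1.abs_le_sublevelRadius hα0 hγ (hIcc.superset (left_mem_Icc.2 hle)),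
    hH.1.abs_le_sublevelRadius hα0 hγ (hIcc.superset (right_mem_Icc.2 hle))⟩

theorem abs_sub_endpoints_le (hα0 : 0 < α0) (hα1 : 0 ≤ α1) (hγ : 0 < γ) (hη : 0 < η)
    (hH : HamSqc α0 α1 γ η H phat) {x y : ℝ}
    (hx : H x (phat x) ≤ lam) (hy : H y (phat y) ≤ lam) :
    |pMinus H lam x - pMinus H lam y| ≤
        endpointLipschitzConst (sublevelRadius α0 γ lam) α1 γ η * |x - y| ∧
      |pPlus H lam x - pPlus H lam y| ≤
        endpointLipschitzConst (sublevelRadius α0 γ lam) α1 γ η * |x - y| := by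
  have hIccx := hH.sublevel_eq_Icc hη hx
  have hIccy := hH.sublevel_eq_Icc hη hy
  have hclose : ∀ p ∈ Icc (pMinus H lam x) (pPlus H lam x) ∪ Icc (pMinus H lam y) (pPlus H lam y),
      |H x p - H y p| ≤ α1 * (sublevelRadius α0 γ lam ^ γ + 1) * |x - y| := by
    rw [← hIccx, ← hIccy]
    rintro p (hp | hp) <;>
      exact hH.1.abs_sub_le_of_abs_le hα1 hγ.le (hH.1.abs_le_sublevelRadius hα0 hγ hp) x y
  have hδ : 0 ≤ α1 * (sublevelRadius α0 γ lam ^ γ + 1) * |x - y| :=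
    (abs_nonneg _).trans (hclose _ (.inl (hIccx.subset hx)))
  rw [endpointLipschitzConst, div_mul_eq_mul_div]
  exact (hH.strictQuasiconvexWith x).abs_sub_endpoints_le hη (hH.strictQuasiconvexWith y)
    hx hy hIccx hIccy hδ hclose

end HamSqc

theorem statement_13_general {Z : Set ℝ} {H : ℝ → ℝ → ℝ} {phat : ℝ → ℝ} {α0 α1 γ η lam : ℝ}
    (hα0 : 0 < α0) (hα1 : 0 ≤ α1) (hγ : 0 < γ) (hη : 0 < η) (hH : HamSqc α0 α1 γ η H phat)
    (hlam : ∀ x ∈ Z, H x (phat x) ≤ lam) :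
    (∀ x ∈ Z, {p | H x p ≤ lam} = Icc (pMinus H lam x) (pPlus H lam x)) ∧
    (∀ x ∈ Z, |pMinus H lam x| ≤ sublevelRadius α0 γ lam ∧
      |pPlus H lam x| ≤ sublevelRadius α0 γ lam) ∧
    (∀ x y, x ∈ Z → y ∈ Z →
      |pMinus H lam x - pMinus H lam y| ≤
          endpointLipschitzConst (sublevelRadius α0 γ lam) α1 γ η * |x - y| ∧
        |pPlus H lam x - pPlus H lam y| ≤
          endpointLipschitzConst (sublevelRadius α0 γ lam) α1 γ η * |x - y|) :=
  ⟨fun x hx => hH.sublevel_eq_Icc hη (hlam x hx),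
    fun x hx => hH.abs_endpoints_le hα0 hγ hη (hlam x hx),
    fun x y hx hy => hH.abs_sub_endpoints_le hα0 hα1 hγ hη (hlam x hx) (hlam y hy)⟩

/-- Proposition `appC prop p lambda`: for `lam ≥ sup_{x∈{a=0}} λ̂(x)` the
endpoint functions `p⁻_lam, p⁺_lam : {a=0} → ℝ` of the sublevel sets `{H(x,·) ≤ lam}` are
well defined, bounded by `K̃_lam = K̃(α₀,γ,lam)` and Lipschitz with constant
`κ̃_lam = κ̃(K̃_lam, α₁, γ, η)`. -/
theorem statement_13 :
    ∃ Kt : ℝ → ℝ → ℝ → ℝ, ∃ κt : ℝ → ℝ → ℝ → ℝ → ℝ,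
      ∀ (a : ℝ → ℝ) (H : ℝ → ℝ → ℝ) (phat : ℝ → ℝ) (κ α0 α1 γ η lam : ℝ),
        (∀ x, a x ∈ Set.Icc (0:ℝ) 1) →
        0 < κ → (∀ x y : ℝ, |Real.sqrt (a x) - Real.sqrt (a y)| ≤ κ * |x - y|) →
        CondA1' a →
        0 < α0 → 0 < α1 → 2 < γ → 0 < η →
        HamSqc α0 α1 γ η H phat →
        (∀ x : ℝ, a x = 0 → H x (phat x) ≤ lam) →
        ∃ pm pp : ℝ → ℝ,
          (∀ x : ℝ, a x = 0 → {p : ℝ | H x p ≤ lam} = Set.Icc (pm x) (pp x)) ∧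
          (∀ x : ℝ, a x = 0 → |pm x| ≤ Kt α0 γ lam ∧ |pp x| ≤ Kt α0 γ lam) ∧
          (∀ x y : ℝ, a x = 0 → a y = 0 →
            |pm x - pm y| ≤ κt (Kt α0 γ lam) α1 γ η * |x - y| ∧
            |pp x - pp y| ≤ κt (Kt α0 γ lam) α1 γ η * |x - y|) := by
  refine ⟨sublevelRadius, endpointLipschitzConst, ?_⟩
  intro a H phat κ α0 α1 γ η lam _ _ _ _ hα0 hα1 hγ hη hH hlam
  exact ⟨pMinus H lam, pPlus H lam, statement_13_general (Z := {x | a x = 0}) hα0 hα1.le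
    (zero_lt_two.trans hγ) hη hH hlam⟩
end
end

section
/- Let a : ℝ → [0,1] satisfy (A1') and have √a κ-Lipschitz, and H ∈ 𝓗_sqc(α0,α1,γ,η) with γ > 2; let λ0 := inf{μ : a u'' + H(x,u') = μ admits a continuous viscosity supersolution on ℝ} and let λ > λ0. Let u1, u2 be viscosity solutions of a(x)u'' + H(x,u') = λ on ℝ, and v1, v2 viscosity solutions of a(x)u'' + H(x,u') = λ0 on ℝ. (a) If u_i' ≥ v_i' almost everywhere on ℝ for each i ∈ {1,2}, then u1 − u2 is constant on ℝ. (b) If u_i' ≤ v_i' almost everywhere on ℝ for each i ∈ {1,2}, then u1 − u2 is constant on ℝ. -/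
open Real Set Filter Topology MeasureTheory

noncomputable section

/-!
Viscosity solutions are Lipschitz, because `H` dominates `a p²`. Hence on `{a > 0}` they are `C²`,
so that `w = u'` solves `a w' + H(x, w) = lam` classically, while `H(x, u') = lam` at every point of
differentiability in `{a = 0}`. Comparison with a solution of lower level, `v' ≤ u'`, forces `u'`
onto the increasing branch of `H(x, ·)`. On `{a = 0}` this is quasiconvexity. At the left end `l` of
a component of `{a > 0}` it holds because otherwise `u' - v'` would have slope at least
`δ / a ≥ δ / (κ² (x - l)²)`, which is not integrable. On the increasing branch `u'` is determined by
`lam`: on `{a = 0}` by injectivity, and next to `l` because a positive difference of two solutions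
of the equation for `w` would again blow up at `l`; ODE uniqueness extends the equality to the whole
component. The case `u' ≤ v'` follows by reflecting `x ↦ -x`.
-/

open scoped NNReal

/-! ### Touching parabolas -/

/-- A parabola with slope `p` and second derivative `X` at `x` touches `u` from above at `x`; these
pairs `(p, X)` form the second-order superjet of `u` at `x`. -/
def TouchedAbove (u : ℝ → ℝ) (x p X : ℝ) : Prop :=
  IsLocalMax (fun y => u y - (p * (y - x) + X / 2 * (y - x) ^ 2)) x

/-- A parabola with slope `p` and second derivative `X` at `x` touches `u` from below at `x`; these
pairs `(p, X)` form the second-order subjet of `u` at `x`. -/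
def TouchedBelow (u : ℝ → ℝ) (x p X : ℝ) : Prop :=
  IsLocalMin (fun y => u y - (p * (y - x) + X / 2 * (y - x) ^ 2)) x

section Touching

variable {u : ℝ → ℝ} {x z p q X : ℝ}

lemma touchedAbove_of_isLocalMax
    (h : IsLocalMax (fun y => u y - (p * (y - z) + X / 2 * (y - z) ^ 2)) x) :
    TouchedAbove u x (p + X * (x - z)) X := by
  filter_upwards [h] with y hy
  linear_combination hy

lemma touchedBelow_of_isLocalMin
    (h : IsLocalMin (fun y => u y - (p * (y - z) + X / 2 * (y - z) ^ 2)) x) :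
    TouchedBelow u x (p + X * (x - z)) X := by
  filter_upwards [h] with y hy
  linear_combination hy

lemma TouchedAbove.neg (h : TouchedAbove u x p X) : TouchedBelow (-u) x (-p) (-X) := by
  filter_upwards [h] with y hy
  simp only [Pi.neg_apply]
  linear_combination hy

lemma TouchedBelow.neg (h : TouchedBelow u x p X) : TouchedAbove (-u) x (-p) (-X) := by
  filter_upwards [h] with y hy
  simp only [Pi.neg_apply]
  linear_combination hy

lemma tendsto_neg_nhds_neg (x : ℝ) : Tendsto (fun y : ℝ => -y) (𝓝 (-x)) (𝓝 x) := by
  simpa using tendsto_neg (-x)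

lemma TouchedAbove.comp_neg (h : TouchedAbove u x p X) :
    TouchedAbove (fun y => u (-y)) (-x) (-p) X := by
  filter_upwards [(tendsto_neg_nhds_neg x).eventually h] with y hy
  simp only [neg_neg]
  linear_combination hy

lemma TouchedAbove.add_parabola (h : TouchedAbove u x p X) (k : ℝ) :
    TouchedAbove (fun y => u y + k / 2 * y ^ 2) x (p + k * x) (X + k) := by
  filter_upwards [h] with y hy
  linear_combination hy

lemma hasDerivAt_parabola (p X x y : ℝ) :
    HasDerivAt (fun y => p * (y - x) + X / 2 * (y - x) ^ 2) (p + X * (y - x)) y := by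
  have hid := (hasDerivAt_id' y).sub_const x
  refine ((hid.const_mul p).fun_add ((hid.fun_pow 2).const_mul (X / 2))).congr_deriv ?_
  ring

lemma TouchedAbove.eq_of_hasDerivAt (h : TouchedAbove u x p X) (hu : HasDerivAt u q x) :
    p = q := by
  have hpar : HasDerivAt (fun y => p * (y - x) + X / 2 * (y - x) ^ 2) p x := by
    simpa using hasDerivAt_parabola p X x x
  linarith [IsLocalMax.hasDerivAt_eq_zero h (hu.sub hpar)]

lemma TouchedAbove.neg_le_of_lipschitzWith {K : ℝ≥0} (h : TouchedAbove u x p X)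
    (hu : LipschitzWith K u) : -K ≤ p := by
  have hlim : Tendsto (fun y => p + X / 2 * (y - x)) (𝓝[>] x) (𝓝 p) := by
    have hcont : Continuous fun y => p + X / 2 * (y - x) := by fun_prop
    simpa using (hcont.tendsto x).mono_left nhdsWithin_le_nhds
  refine ge_of_tendsto hlim ?_
  filter_upwards [h.filter_mono nhdsWithin_le_nhds, self_mem_nhdsWithin] with y hy hxy
  rw [mem_Ioi, ← sub_pos] at hxy
  have hdist := neg_le_of_abs_le (hu.dist_le_mul y x)
  rw [Real.dist_eq, abs_of_pos hxy] at hdist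
  refine le_of_mul_le_mul_right ?_ hxy
  linear_combination hy + hdist

lemma TouchedAbove.abs_le_of_lipschitzWith {K : ℝ≥0} (h : TouchedAbove u x p X)
    (hu : LipschitzWith K u) : |p| ≤ K := by
  have hrefl : LipschitzWith K fun y => u (-y) := by
    simpa [Function.comp_def] using hu.comp (isometry_neg (G := ℝ)).lipschitz
  have hright := h.neg_le_of_lipschitzWith hu
  have hleft := h.comp_neg.neg_le_of_lipschitzWith hrefl
  exact abs_le.2 ⟨hright, by linarith⟩

lemma TouchedBelow.abs_le_of_lipschitzWith {K : ℝ≥0} (h : TouchedBelow u x p X)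
    (hu : LipschitzWith K u) : |p| ≤ K := by
  simpa using h.neg.abs_le_of_lipschitzWith hu.neg

lemma TouchedBelow.eq_of_hasDerivAt (h : TouchedBelow u x p X) (hu : HasDerivAt u q x) :
    p = q :=
  neg_injective (h.neg.eq_of_hasDerivAt hu.neg)

end Touching

section Viscosity

variable {a : ℝ → ℝ} {H : ℝ → ℝ → ℝ} {lam : ℝ} {U : Set ℝ} {u : ℝ → ℝ} {x p X : ℝ}

lemma deriv_parabola (p X x : ℝ) :
    deriv (fun y => p * (y - x) + X / 2 * (y - x) ^ 2) = fun y => p + X * (y - x) :=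
  funext fun y => (hasDerivAt_parabola p X x y).deriv

lemma ViscSubOn.le_of_touchedAbove (hu : ViscSubOn a H lam U u) (hx : x ∈ U)
    (h : TouchedAbove u x p X) : lam ≤ a x * X + H x p := by
  simpa [deriv_parabola] using hu _ (by fun_prop) x hx h

lemma ViscSuperOn.le_of_touchedBelow (hu : ViscSuperOn a H lam U u) (hx : x ∈ U)
    (h : TouchedBelow u x p X) : a x * X + H x p ≤ lam := by
  simpa [deriv_parabola] using hu _ (by fun_prop) x hx h

lemma ViscSuperOn.neg (hu : ViscSuperOn a H lam U u) :
    ViscSubOn a (fun x p => -H x (-p)) (-lam) U (-u) := by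
  intro φ hφ x hx hmax
  have hmin : IsLocalMin (fun y => u y - (-φ) y) x := by
    filter_upwards [hmax] with y hy
    simp only [Pi.neg_apply] at hy ⊢
    linarith
  have hle := hu (-φ) hφ.neg x hx hmin
  rw [deriv.neg', deriv.fun_neg] at hle
  linarith

lemma deriv_deriv_comp_neg (φ : ℝ → ℝ) (x : ℝ) :
    deriv (deriv fun y => φ (-y)) x = deriv (deriv φ) (-x) := by
  have hderiv : deriv (fun y => φ (-y)) = fun y => -deriv φ (-y) := funext (deriv_comp_neg φ)
  rw [hderiv, deriv.fun_neg, deriv_comp_neg, neg_neg]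

lemma ViscSuperOn.comp_neg (hu : ViscSuperOn a H lam U u) :
    ViscSuperOn (fun x => a (-x)) (fun x p => H (-x) (-p)) lam (Neg.neg ⁻¹' U)
      (fun x => u (-x)) := by
  intro φ hφ x hx hmin
  have hmin' : IsLocalMin (fun y => u y - φ (-y)) (-x) := by
    filter_upwards [(tendsto_neg_nhds_neg x).eventually hmin] with y hy
    simpa using hy
  simpa [deriv_deriv_comp_neg, deriv_comp_neg φ] using
    hu (fun y => φ (-y)) (by fun_prop) (-x) hx hmin'

lemma ViscSubOn.comp_neg (hu : ViscSubOn a H lam U u) :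
    ViscSubOn (fun x => a (-x)) (fun x p => H (-x) (-p)) lam (Neg.neg ⁻¹' U)
      (fun x => u (-x)) := by
  intro φ hφ x hx hmax
  have hmax' : IsLocalMax (fun y => u y - φ (-y)) (-x) := by
    filter_upwards [(tendsto_neg_nhds_neg x).eventually hmax] with y hy
    simpa using hy
  simpa [deriv_deriv_comp_neg, deriv_comp_neg φ] using
    hu (fun y => φ (-y)) (by fun_prop) (-x) hx hmax'

lemma ViscSolOn.comp_neg (hu : ViscSolOn a H lam U u) :
    ViscSolOn (fun x => a (-x)) (fun x p => H (-x) (-p)) lam (Neg.neg ⁻¹' U)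
      (fun x => u (-x)) :=
  ⟨hu.1.comp_neg, hu.2.comp_neg⟩

end Viscosity

/-! ### Lipschitz bound for supersolutions -/

lemma exists_isLocalMin_mem_Ioo {f : ℝ → ℝ} {x y z : ℝ} (hf : ContinuousOn f (Icc x y))
    (hz : z ∈ Ioo x y) (hzx : f z < f x) (hzy : f z < f y) : ∃ m ∈ Ioo x y, IsLocalMin f m := by
  refine isCompact_Icc.exists_isLocalMin_mem_open Ioo_subset_Icc_self hf
    (Ioo_subset_Icc_self hz) ?_ isOpen_Ioo
  rw [Icc_sdiff_Ioo_same (hz.1.trans hz.2).le]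
  rintro w (rfl | rfl) <;> assumption

lemma exists_isLocalMax_mem_Ioo {f : ℝ → ℝ} {x y z : ℝ} (hf : ContinuousOn f (Icc x y))
    (hz : z ∈ Ioo x y) (hxz : f x < f z) (hyz : f y < f z) : ∃ m ∈ Ioo x y, IsLocalMax f m := by
  obtain ⟨m, hm, hmin⟩ := exists_isLocalMin_mem_Ioo hf.neg hz (neg_lt_neg hxz) (neg_lt_neg hyz)
  exact ⟨m, hm, by simpa using hmin.neg⟩

section NoLocalMin

variable {f : ℝ → ℝ} (hf : Continuous f) (hmin : ∀ x, ¬IsLocalMin f x)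
include hf hmin

lemma monotoneOn_Iic_of_lt {x y : ℝ} (hxy : x < y) (hlt : f x < f y) : MonotoneOn f (Iic x) := by
  intro s _ t ht hst
  by_contra! hlt'
  have hst' : s < t := hst.lt_of_ne (by rintro rfl; exact hlt'.false)
  rcases le_total (f t) (f x) with htx | hxt
  · obtain ⟨m, -, hm⟩ := exists_isLocalMin_mem_Ioo hf.continuousOn
      ⟨hst', lt_of_le_of_lt ht hxy⟩ hlt' (htx.trans_lt hlt)
    exact hmin m hm
  · obtain ⟨m, -, hm⟩ := exists_isLocalMin_mem_Ioo hf.continuousOn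
      ⟨hst'.trans_le ht, hxy⟩ (hxt.trans_lt hlt') hlt
    exact hmin m hm

lemma antitoneOn_Ici_of_not_monotoneOn_Iic {x : ℝ} (hx : ¬MonotoneOn f (Iic x)) :
    AntitoneOn f (Ici x) := by
  intro s hs t _ hst
  by_contra! hlt
  have hst' : s < t := hst.lt_of_ne (by rintro rfl; exact hlt.false)
  exact hx ((monotoneOn_Iic_of_lt hf hmin hst' hlt).mono (Iic_subset_Iic.2 hs))

end NoLocalMin

/-- The Hamiltonian eventually dominates every level plus a multiple of `a x * p ^ 2`; this is the
form in which superquadratic growth enters. -/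
def QuadraticallyCoercive (a : ℝ → ℝ) (H : ℝ → ℝ → ℝ) : Prop :=
  ∀ lam : ℝ, ∃ c > 0, ∃ M > 0, ∀ x p : ℝ, M ≤ |p| → lam + c * a x * p ^ 2 < H x p

section SlopeDoubling

variable {a : ℝ → ℝ} {H : ℝ → ℝ → ℝ} {lam c M : ℝ} {u : ℝ → ℝ}
  (ha : ∀ x, 0 ≤ a x) (hc : 0 < c) (hM : 0 < M)
  (hco : ∀ x p : ℝ, M ≤ |p| → lam + c * a x * p ^ 2 < H x p)
  (hu : Continuous u) (hsuper : ViscSuperOn a H lam univ u)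

include ha hc hco hsuper in
lemma ViscSuperOn.not_isLocalMin_sub_linear {p : ℝ} (hp : M ≤ p) (x : ℝ) :
    ¬IsLocalMin (fun s => u s - p * s) x := by
  intro hmin
  have htouch : TouchedBelow u x (p + 0 * (x - 0)) 0 :=
    touchedBelow_of_isLocalMin (by simpa using hmin)
  have hle := hsuper.le_of_touchedBelow (mem_univ x) htouch
  rw [mul_zero, zero_add, zero_mul, add_zero] at hle
  have hax : 0 ≤ c * a x * p ^ 2 := by have := ha x; positivity
  linarith [hco x p (hp.trans (le_abs_self p))]

include ha hc hco hsuper in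
lemma ViscSuperOn.not_touchedBelow {x p q : ℝ} (hp : 0 ≤ p) (hq : M ≤ q) (hpq : p / 2 ≤ q) :
    ¬TouchedBelow u x q (-(c * p ^ 2 / 4)) := by
  intro htouch
  have hle := hsuper.le_of_touchedBelow (mem_univ x) htouch
  have hsq : c * a x * (p / 2) ^ 2 ≤ c * a x * q ^ 2 := by
    have := ha x
    gcongr
  linarith [hco x q (hq.trans (le_abs_self q))]

include ha hc hM hco hu hsuper in
/-- If `u` had slope between `p` and `2p` all along an interval of length `10 / (c p)`, then the
concave parabola with slope `p / 2` at its right end and second derivative `-c p² / 4` would, up to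
an additive constant, touch `u` from below inside it. -/
lemma ViscSuperOn.monotoneOn_sub_double {p x : ℝ} (hp : 2 * M ≤ p)
    (hmono : MonotoneOn (fun s => u s - p * s) (Iic x)) :
    MonotoneOn (fun s => u s - 2 * p * s) (Iic (x - 10 / (c * p))) := by
  have hp0 : 0 < p := by linarith
  set h := 10 / (c * p) with hh
  have hh0 : 0 < h := by positivity
  have hcp : c * p * h = 10 := by rw [hh]; field_simp
  by_contra hnot
  have hanti := antitoneOn_Ici_of_not_monotoneOn_Iic (by fun_prop)
    (hsuper.not_isLocalMin_sub_linear ha hc hco (by linarith)) hnot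
  have hzx : u (x - 3 / 10 * h) - p * (x - 3 / 10 * h) ≤ u x - p * x :=
    hmono (mem_Iic.2 (by linarith)) self_mem_Iic (by linarith)
  have hzl : u (x - 3 / 10 * h) - 2 * p * (x - 3 / 10 * h) ≤ u (x - h) - 2 * p * (x - h) :=
    hanti self_mem_Ici (mem_Ici.2 (by linarith)) (by linarith)
  have hcph : c * p ^ 2 * h ^ 2 = 10 * (p * h) := by linear_combination p * h * hcp
  have hph : 0 < p * h := by positivity
  obtain ⟨m, ⟨-, hmx⟩, hmin⟩ := exists_isLocalMin_mem_Ioo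
    (f := fun y => u y - (p / 2 * (y - x) + -(c * p ^ 2 / 4) / 2 * (y - x) ^ 2))
    (x := x - h) (y := x) (z := x - 3 / 10 * h) (by fun_prop) ⟨by linarith, by linarith⟩
    (by linarith) (by linarith)
  have hslope : p / 2 ≤ p / 2 + -(c * p ^ 2 / 4) * (m - x) := by
    have : 0 ≤ c * p ^ 2 / 4 * (x - m) := mul_nonneg (by positivity) (by linarith)
    linarith
  exact hsuper.not_touchedBelow ha hc hco hp0.le (by linarith) hslope
    (touchedBelow_of_isLocalMin hmin)

include ha hc hM hco hu hsuper in
lemma ViscSuperOn.not_monotoneOn_sub_linear {p : ℝ} (hp : 2 * M ≤ p) (x : ℝ) :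
    ¬MonotoneOn (fun s => u s - p * s) (Iic x) := by
  intro hmono
  have hp0 : 0 < p := by linarith
  set h := 10 / (c * p) with hh
  have hiter : ∀ n : ℕ, MonotoneOn (fun s => u s - 2 ^ n * p * s)
      (Iic (x - 2 * h * (1 - 1 / 2 ^ n))) := by
    intro n
    induction n with
    | zero => simpa using hmono
    | succ n ih =>
      have hpn : 2 * M ≤ 2 ^ n * p :=
        hp.trans (le_mul_of_one_le_left hp0.le (one_le_pow₀ one_le_two))
      convert hsuper.monotoneOn_sub_double ha hc hM hco hu hpn ih using 2
      · ring
      · rw [hh]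
        field_simp
        ring
  set y := x - 2 * h
  obtain ⟨n, hn⟩ := pow_unbounded_of_one_lt ((u y - u (y - 1)) / p) one_lt_two
  have hle : y ≤ x - 2 * h * (1 - 1 / 2 ^ n) := by
    have : 0 ≤ 2 * h * (1 / 2 ^ n) := by positivity
    linarith
  have hgrow := hiter n (mem_Iic.2 (by linarith : y - 1 ≤ _)) (mem_Iic.2 hle) (by linarith)
  rw [div_lt_iff₀ hp0] at hn
  simp only at hgrow
  linarith

include ha hc hM hco hu hsuper in
lemma ViscSuperOn.sub_le {x y : ℝ} (hxy : x ≤ y) : u y - u x ≤ 2 * M * (y - x) := by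
  have hanti := antitoneOn_Ici_of_not_monotoneOn_Iic (by fun_prop)
    (hsuper.not_isLocalMin_sub_linear ha hc hco (by linarith : M ≤ 2 * M))
    (hsuper.not_monotoneOn_sub_linear ha hc hM hco hu le_rfl x)
  have := hanti self_mem_Ici hxy hxy
  simp only at this
  linarith

end SlopeDoubling

lemma ViscSuperOn.exists_lipschitzWith {a : ℝ → ℝ} {H : ℝ → ℝ → ℝ} {lam : ℝ} {u : ℝ → ℝ}
    (hsuper : ViscSuperOn a H lam univ u) (ha : ∀ x, 0 ≤ a x) (hco : QuadraticallyCoercive a H)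
    (hu : Continuous u) : ∃ K : ℝ≥0, LipschitzWith K u := by
  obtain ⟨c, hc, M, hM, hcM⟩ := hco lam
  refine ⟨_, LipschitzWith.of_le_add_mul' (2 * M) fun x y => ?_⟩
  rcases le_total x y with hxy | hyx
  · have hrefl := hsuper.comp_neg.sub_le (fun x => ha (-x)) hc hM
      (fun x p hp => by simpa using hcM (-x) (-p) (by rwa [abs_neg])) (by fun_prop)
      (neg_le_neg hxy)
    rw [dist_comm, Real.dist_eq, abs_of_nonneg (sub_nonneg.2 hxy)]
    simp only [neg_neg] at hrefl
    linarith
  · rw [Real.dist_eq, abs_of_nonneg (sub_nonneg.2 hyx)]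
    linarith [hsuper.sub_le ha hc hM hcM hu hyx]

/-! ### Regularity where the equation is nondegenerate -/

lemma convexOn_of_touchedAbove_nonneg {u : ℝ → ℝ} {S : Set ℝ} (hS : Convex ℝ S)
    (hu : ContinuousOn u S) (h : ∀ x ∈ S, ∀ p X, TouchedAbove u x p X → 0 ≤ X) :
    ConvexOn ℝ S u := by
  refine convexOn_of_slope_mono_adjacent hS fun {x y z} hx hz hxy hyz => ?_
  by_contra! hslope
  have hyx0 : 0 < y - x := sub_pos.2 hxy
  have hzy0 : 0 < z - y := sub_pos.2 hyz
  have hzx0 : 0 < z - x := by linarith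
  have hsub : Icc x z ⊆ S := hS.ordConnected.out hx hz
  set gap := (u y - u x) * (z - x) - (u z - u x) * (y - x) with hgap
  have hgap0 : 0 < gap := by
    rw [div_lt_div_iff₀ hzy0 hyx0] at hslope
    linarith
  set k := gap / ((y - x) * (z - y) * (z - x)) with hk
  have hk0 : 0 < k := by positivity
  have hkgap : k * ((y - x) * (z - y) * (z - x)) = gap := by rw [hk]; field_simp
  -- the slope for which the parabola `P` below satisfies `P z - P x = u z - u x`
  set β := (u z - u x) / (z - x) + k / 2 * (z - x) with hβ
  have hβz : β * (z - x) = u z - u x + k / 2 * (z - x) ^ 2 := by rw [hβ]; field_simp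
  have hy : u x < u y - (β * (y - x) + -k / 2 * (y - x) ^ 2) := by
    refine lt_of_mul_lt_mul_right ?_ hzx0.le
    linear_combination hgap0 / 2 + hgap + hkgap / 2 + (y - x) * hβz
  obtain ⟨m, hm, hmax⟩ := exists_isLocalMax_mem_Ioo
    (f := fun s => u s - (β * (s - x) + -k / 2 * (s - x) ^ 2)) (x := x) (y := z) (z := y)
    ((hu.mono hsub).sub (by fun_prop)) ⟨hxy, hyz⟩ (by simpa using hy) (by linarith)
  linarith [h m (hsub (Ioo_subset_Icc_self hm)) _ _ (touchedAbove_of_isLocalMax hmax)]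

lemma differentiableAt_of_convexOn_of_add {f g : ℝ → ℝ} {S : Set ℝ} {x : ℝ} (hf : ConvexOn ℝ S f)
    (hg : ConvexOn ℝ S g) (hx : x ∈ interior S) (hfg : DifferentiableAt ℝ (f + g) x) :
    DifferentiableAt ℝ f x := by
  have hfr := hf.hasDerivWithinAt_rightDeriv_of_mem_interior hx
  have hfl := hf.hasDerivWithinAt_leftDeriv_of_mem_interior hx
  have hright := (uniqueDiffWithinAt_Ioi x).eq_deriv _
    (hfr.add (hg.hasDerivWithinAt_rightDeriv_of_mem_interior hx)) hfg.hasDerivAt.hasDerivWithinAt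
  have hleft := (uniqueDiffWithinAt_Iio x).eq_deriv _
    (hfl.add (hg.hasDerivWithinAt_leftDeriv_of_mem_interior hx)) hfg.hasDerivAt.hasDerivWithinAt
  have heq : derivWithin f (Iio x) x = derivWithin f (Ioi x) x := by
    linarith [hf.leftDeriv_le_rightDeriv_of_mem_interior hx,
      hg.leftDeriv_le_rightDeriv_of_mem_interior hx]
  rw [heq] at hfl
  have hunion := (hasDerivWithinAt_Ioi_iff_Ici.1 hfr).union (hasDerivWithinAt_Iio_iff_Iic.1 hfl)
  rw [Ici_union_Iic, hasDerivWithinAt_univ] at hunion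
  exact hunion.differentiableAt

/-- The bounds `k ≤ u'' ≤ k'` at `x` in the viscosity sense. -/
structure SecondDerivBoundsAt (u : ℝ → ℝ) (k k' x : ℝ) : Prop where
  lower : ∀ p X, TouchedAbove u x p X → k ≤ X
  upper : ∀ p X, TouchedBelow u x p X → X ≤ k'

namespace SecondDerivBoundsAt

variable {u : ℝ → ℝ} {k k' c x y : ℝ}

lemma neg (h : SecondDerivBoundsAt u k k' x) : SecondDerivBoundsAt (-u) (-k') (-k) x where
  lower p X htouch := by
    have := h.upper _ _ (by simpa using htouch.neg)
    linarith
  upper p X htouch := by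
    have := h.lower _ _ (by simpa using htouch.neg)
    linarith

section OnConvexSet

variable {S : Set ℝ} (hSc : Convex ℝ S) (hSo : IsOpen S) (hu : ContinuousOn u S)
  (h : ∀ x ∈ S, SecondDerivBoundsAt u k k' x)
include hSc hu h

lemma convexOn : ConvexOn ℝ S (fun y => u y + -k / 2 * y ^ 2) := by
  refine convexOn_of_touchedAbove_nonneg hSc (hu.add (by fun_prop)) fun x hx p X htouch => ?_
  have hX := (h x hx).lower _ _ (by simpa [neg_div] using htouch.add_parabola k)
  linarith

include hSo

lemma differentiableAt (hx : x ∈ S) : DifferentiableAt ℝ u x := by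
  have hbelow := convexOn hSc hu h
  have habove := convexOn hSc hu.neg fun x hx => (h x hx).neg
  have hsum : (fun y => u y + -k / 2 * y ^ 2) + (fun y => (-u) y + - -k' / 2 * y ^ 2)
      = fun y => (k' - k) / 2 * y ^ 2 := by
    funext y
    simp only [Pi.add_apply, Pi.neg_apply]
    ring
  have hdiff := differentiableAt_of_convexOn_of_add hbelow habove (by rwa [hSo.interior_eq])
    (by rw [hsum]; fun_prop)
  simpa using hdiff.fun_sub (by fun_prop : DifferentiableAt ℝ (fun y => -k / 2 * y ^ 2) x)

lemma mul_sub_le_deriv_sub (hx : x ∈ S) (hy : y ∈ S) (hxy : x ≤ y) :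
    k * (y - x) ≤ deriv u y - deriv u x := by
  have hderiv : ∀ z ∈ S, HasDerivAt (fun y => u y + -k / 2 * y ^ 2) (deriv u z - k * z) z := by
    intro z hz
    refine ((differentiableAt hSc hSo hu h hz).hasDerivAt.fun_add
      ((hasDerivAt_pow 2 z).const_mul (-k / 2))).congr_deriv ?_
    ring
  have hmono := (convexOn hSc hu h).monotoneOn_deriv
    (fun z hz => (hderiv z hz).differentiableAt) hx hy hxy
  rw [(hderiv x hx).deriv, (hderiv y hy).deriv] at hmono
  linarith

lemma deriv_sub_le_mul_sub (hx : x ∈ S) (hy : y ∈ S) (hxy : x ≤ y) :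
    deriv u y - deriv u x ≤ k' * (y - x) := by
  have hneg := mul_sub_le_deriv_sub hSc hSo hu.neg (fun x hx => (h x hx).neg) hx hy hxy
  simp only [deriv.neg] at hneg
  linarith

end OnConvexSet

lemma eventually_differentiableAt (hu : Continuous u)
    (h : ∀ᶠ y in 𝓝 x, SecondDerivBoundsAt u k k' y) : ∀ᶠ y in 𝓝 x, DifferentiableAt ℝ u y := by
  obtain ⟨r, hr, hball⟩ := Metric.eventually_nhds_iff_ball.1 h
  filter_upwards [Metric.ball_mem_nhds x hr] with y hy
  exact differentiableAt (convex_ball x r) Metric.isOpen_ball hu.continuousOn hball hy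

lemma eventually_abs_deriv_sub_le {e : ℝ} (hu : Continuous u)
    (h : ∀ᶠ y in 𝓝 x, SecondDerivBoundsAt u (c - e) (c + e) y) :
    ∀ᶠ y in 𝓝 x, |deriv u y - deriv u x - c * (y - x)| ≤ e * |y - x| := by
  obtain ⟨r, hr, hball⟩ := Metric.eventually_nhds_iff_ball.1 h
  have hx := Metric.mem_ball_self (x := x) hr
  have hlower {y z : ℝ} :=
    mul_sub_le_deriv_sub (x := y) (y := z) (convex_ball x r) Metric.isOpen_ball
      hu.continuousOn hball
  have hupper {y z : ℝ} :=
    deriv_sub_le_mul_sub (x := y) (y := z) (convex_ball x r) Metric.isOpen_ball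
      hu.continuousOn hball
  filter_upwards [Metric.ball_mem_nhds x hr] with y hy
  rw [abs_le]
  rcases le_total x y with hxy | hyx
  · rw [abs_of_nonneg (sub_nonneg.2 hxy)]
    constructor <;> linarith [hlower hx hy hxy, hupper hx hy hxy]
  · rw [abs_of_nonpos (sub_nonpos.2 hyx)]
    constructor <;> linarith [hlower hy hx hyx, hupper hy hx hyx]

lemma hasDerivAt_deriv (hu : Continuous u)
    (h : ∀ e > 0, ∀ᶠ y in 𝓝 x, SecondDerivBoundsAt u (c - e) (c + e) y) :
    HasDerivAt (deriv u) c x := by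
  rw [hasDerivAt_iff_isLittleO, Asymptotics.isLittleO_iff]
  intro e he
  filter_upwards [eventually_abs_deriv_sub_le hu (h e he)] with y hy
  simpa [mul_comm] using hy

lemma continuousAt_deriv (hu : Continuous u)
    (h : ∀ᶠ y in 𝓝 x, SecondDerivBoundsAt u k k' y) : ContinuousAt (deriv u) x := by
  have hbound := eventually_abs_deriv_sub_le (c := (k + k') / 2) (e := (k' - k) / 2) hu
    (by convert h using 3 <;> ring)
  refine tendsto_iff_dist_tendsto_zero.2 (squeeze_zero' (.of_forall fun _ => dist_nonneg)
    (g := fun y => ((k' - k) / 2 + |(k + k') / 2|) * |y - x|) ?_ ?_)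
  · filter_upwards [hbound] with y hy
    rw [Real.dist_eq]
    calc |deriv u y - deriv u x|
        ≤ |deriv u y - deriv u x - (k + k') / 2 * (y - x)| + |(k + k') / 2 * (y - x)| := by
          simpa only [sub_add_cancel] using
            abs_add_le (deriv u y - deriv u x - (k + k') / 2 * (y - x)) ((k + k') / 2 * (y - x))
      _ ≤ ((k' - k) / 2 + |(k + k') / 2|) * |y - x| := by rw [abs_mul]; linarith
  · have hcont : Continuous fun y => ((k' - k) / 2 + |(k + k') / 2|) * |y - x| := by fun_prop
    simpa using hcont.tendsto x

end SecondDerivBoundsAt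

section Nondegenerate

variable {a : ℝ → ℝ} {H : ℝ → ℝ → ℝ} {lam : ℝ} {u : ℝ → ℝ} {x k k' : ℝ} {K : ℝ≥0}

lemma ViscSolOn.secondDerivBoundsAt (hu : ViscSolOn a H lam univ u) (hax : 0 < a x)
    (hlower : ∀ p X, TouchedAbove u x p X → k ≤ (lam - H x p) / a x)
    (hupper : ∀ p X, TouchedBelow u x p X → (lam - H x p) / a x ≤ k') :
    SecondDerivBoundsAt u k k' x where
  lower p X htouch := by
    refine (hlower p X htouch).trans ((div_le_iff₀ hax).2 ?_)
    linarith [hu.1.le_of_touchedAbove (mem_univ x) htouch]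
  upper p X htouch := by
    refine ((le_div_iff₀ hax).2 ?_).trans (hupper p X htouch)
    linarith [hu.2.le_of_touchedBelow (mem_univ x) htouch]

lemma exists_eventually_abs_lt_of_isCompact {F : ℝ → ℝ → ℝ} {s : Set ℝ} (hs : IsCompact s)
    (hF : ∀ p ∈ s, ContinuousAt ↿F (x, p)) : ∃ C, ∀ᶠ y in 𝓝 x, ∀ p ∈ s, |F y p| < C := by
  have hFx : ContinuousOn (F x) s := fun p hp =>
    ((hF p hp).comp (f := fun q => (x, q)) (by fun_prop)).continuousWithinAt
  obtain ⟨C, hC⟩ := hs.exists_bound_of_continuousOn hFx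
  refine ⟨C + 1, hs.eventually_forall_of_forall_eventually fun p hp => ?_⟩
  have hlt : |↿F (x, p)| < C + 1 := (hC p hp).trans_lt (lt_add_one C)
  exact (hF p hp).abs.eventually_lt_const hlt

variable (hu : ViscSolOn a H lam univ u) (hK : LipschitzWith K u) (ha : Continuous a)
  (hH : Continuous ↿H) (hax : 0 < a x)
include hu hK ha hH hax

lemma ViscSolOn.exists_eventually_secondDerivBoundsAt :
    ∃ C, ∀ᶠ y in 𝓝 x, SecondDerivBoundsAt u (-C) C y := by
  have hF : ∀ p, ContinuousAt ↿(fun y p => (lam - H y p) / a y) (x, p) := fun p =>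
    ((continuous_const.sub hH).continuousAt).div (ha.comp continuous_fst).continuousAt hax.ne'
  obtain ⟨C, hC⟩ := exists_eventually_abs_lt_of_isCompact (s := Icc (-K : ℝ) K) isCompact_Icc
    fun p _ => hF p
  refine ⟨C, ?_⟩
  filter_upwards [hC, ha.continuousAt.eventually_const_lt hax] with y hy hay
  exact hu.secondDerivBoundsAt hay
    (fun p X htouch => (abs_lt.1 (hy p (abs_le.1 (htouch.abs_le_of_lipschitzWith hK)))).1.le)
    (fun p X htouch => (abs_lt.1 (hy p (abs_le.1 (htouch.abs_le_of_lipschitzWith hK)))).2.le)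

theorem ViscSolOn.hasDerivAt_deriv :
    HasDerivAt (deriv u) ((lam - H x (deriv u x)) / a x) x := by
  obtain ⟨C, hC⟩ := hu.exists_eventually_secondDerivBoundsAt hK ha hH hax
  have hdiff := SecondDerivBoundsAt.eventually_differentiableAt hK.continuous hC
  have hcont := SecondDerivBoundsAt.continuousAt_deriv hK.continuous hC
  have hrhs : ContinuousAt (fun y => (lam - H y (deriv u y)) / a y) x :=
    (continuousAt_const.sub
      (hH.continuousAt.comp (f := fun y => (y, deriv u y)) (continuousAt_id.prodMk hcont))).div
      ha.continuousAt hax.ne'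
  refine SecondDerivBoundsAt.hasDerivAt_deriv hK.continuous fun e he => ?_
  filter_upwards [hdiff, ha.continuousAt.eventually_const_lt hax,
    Metric.tendsto_nhds.1 hrhs e he] with y hy hay hye
  rw [Real.dist_eq, abs_lt] at hye
  refine hu.secondDerivBoundsAt hay (fun p X htouch => ?_) (fun p X htouch => ?_)
  · rw [htouch.eq_of_hasDerivAt hy.hasDerivAt]
    linarith
  · rw [htouch.eq_of_hasDerivAt hy.hasDerivAt]
    linarith

end Nondegenerate

/-! ### Points where the equation degenerates -/

lemma exists_touchedAbove_near {u : ℝ → ℝ} {p y e : ℝ} (hu : Continuous u)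
    (hd : HasDerivAt u p y) (he : 0 < e) :
    ∃ m q X, TouchedAbove u m q X ∧ 0 ≤ X ∧ |m - y| < e ∧ |q - p| < e ∧ X * (m - y) ^ 2 < e := by
  have hlin : ∀ᶠ s in 𝓝 y, |u s - u y - (s - y) * p| ≤ e / 4 * |s - y| :=
    (hasDerivAt_iff_isLittleO.1 hd).bound (by positivity)
  obtain ⟨r₀, hr₀, hball⟩ := Metric.eventually_nhds_iff_ball.1 hlin
  obtain ⟨r, hr, hrmin⟩ := exists_between (lt_min hr₀ (lt_min he one_pos))
  obtain ⟨hrr₀, hre, hr1⟩ : r < r₀ ∧ r < e ∧ r < 1 := by simpa using hrmin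
  set X := e / r with hX
  have hX0 : 0 < X := by positivity
  have hXr : X * r = e := by rw [hX]; field_simp
  have hright : |u (y + r) - u y - r * p| ≤ e / 4 * r := by
    simpa [abs_of_pos hr] using hball (y + r) (by simp [abs_of_pos hr, hrr₀])
  have hleft : |u (y - r) - u y - -r * p| ≤ e / 4 * r := by
    simpa [abs_of_pos hr] using hball (y - r) (by simp [abs_of_pos hr, hrr₀])
  have her : 0 < e * r := by positivity
  have hXrr : X * r ^ 2 = e * r := by rw [← hXr]; ring
  obtain ⟨m, hm, hmax⟩ := exists_isLocalMax_mem_Ioo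
    (f := fun s => u s - (p * (s - y) + X / 2 * (s - y) ^ 2)) (x := y - r) (y := y + r) (z := y)
    (by fun_prop) ⟨by linarith, by linarith⟩
    (by linarith [(abs_le.1 hleft).2]) (by linarith [(abs_le.1 hright).2])
  have hmr : |m - y| < r := abs_lt.2 ⟨by linarith [hm.1], by linarith [hm.2]⟩
  have hXm : X * |m - y| < e := hXr ▸ mul_lt_mul_of_pos_left hmr hX0
  refine ⟨m, _, X, touchedAbove_of_isLocalMax hmax, hX0.le, hmr.trans hre, ?_, ?_⟩
  · rwa [add_sub_cancel_left, abs_mul, abs_of_pos hX0]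
  · calc X * (m - y) ^ 2 = X * |m - y| * |m - y| := by rw [mul_assoc, abs_mul_abs_self, sq]
      _ ≤ X * |m - y| * 1 := by gcongr; linarith
      _ < e := by rwa [mul_one]

lemma exists_seq_touchedAbove {u : ℝ → ℝ} {p y : ℝ} (hu : Continuous u) (hd : HasDerivAt u p y) :
    ∃ m q X : ℕ → ℝ, (∀ n, TouchedAbove u (m n) (q n) (X n)) ∧ (∀ n, 0 ≤ X n) ∧
      Tendsto m atTop (𝓝 y) ∧ Tendsto q atTop (𝓝 p) ∧
      Tendsto (fun n => X n * (m n - y) ^ 2) atTop (𝓝 0) := by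
  choose m q X htouch hX hm hq hXm using fun n : ℕ =>
    exists_touchedAbove_near hu hd (Nat.one_div_pos_of_nat (α := ℝ) (n := n))
  have hlim := tendsto_one_div_add_atTop_nhds_zero_nat (𝕜 := ℝ)
  refine ⟨m, q, X, htouch, hX, ?_, ?_, ?_⟩
  · exact tendsto_iff_dist_tendsto_zero.2
      (squeeze_zero (fun _ => dist_nonneg) (fun n => (hm n).le) hlim)
  · exact tendsto_iff_dist_tendsto_zero.2
      (squeeze_zero (fun _ => dist_nonneg) (fun n => (hq n).le) hlim)
  · exact squeeze_zero (fun n => mul_nonneg (hX n) (sq_nonneg _)) (fun n => (hXm n).le) hlim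

section Degenerate

variable {a : ℝ → ℝ} {H : ℝ → ℝ → ℝ} {lam C p y : ℝ} {u : ℝ → ℝ}

lemma ViscSubOn.le_of_hasDerivAt (hsub : ViscSubOn a H lam univ u) (hu : Continuous u)
    (hH : Continuous ↿H) (ha : ∀ x, a x ≤ C * (x - y) ^ 2) (hd : HasDerivAt u p y) :
    lam ≤ H y p := by
  obtain ⟨m, q, X, htouch, hX, hm, hq, hXm⟩ := exists_seq_touchedAbove hu hd
  have hlim : Tendsto (fun n => C * (X n * (m n - y) ^ 2) + ↿H (m n, q n)) atTop
      (𝓝 (C * 0 + ↿H (y, p))) :=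
    (hXm.const_mul C).add ((hH.tendsto (y, p)).comp (hm.prodMk_nhds hq))
  rw [mul_zero, zero_add] at hlim
  refine ge_of_tendsto' hlim fun n => ?_
  have hvisc := hsub.le_of_touchedAbove (mem_univ _) (htouch n)
  have haX := mul_le_mul_of_nonneg_right (ha (m n)) (hX n)
  calc lam ≤ a (m n) * X n + H (m n) (q n) := hvisc
    _ ≤ C * (X n * (m n - y) ^ 2) + H (m n) (q n) := by linarith

lemma ViscSolOn.eq_of_hasDerivAt (hsol : ViscSolOn a H lam univ u) (hu : Continuous u)
    (hH : Continuous ↿H) (ha : ∀ x, a x ≤ C * (x - y) ^ 2) (hd : HasDerivAt u p y) :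
    H y p = lam := by
  have hneg : Continuous ↿(fun x p => -H x (-p)) :=
    (hH.comp (continuous_fst.prodMk continuous_snd.neg)).neg
  have hsuper := hsol.2.neg.le_of_hasDerivAt hu.neg hneg ha hd.neg
  rw [neg_neg] at hsuper
  exact le_antisymm (neg_le_neg_iff.1 hsuper) (hsol.1.le_of_hasDerivAt hu hH ha hd)

end Degenerate

/-! ### Strictly quasiconvex functions -/

/-- `f` has slope at most `-η` to the left of `c` and at least `η` to the right of it, in the sense
of difference quotients. -/
structure StrictQuasiconvexWith_s14 (η c : ℝ) (f : ℝ → ℝ) : Prop where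
  pos : 0 < η
  left : ∀ ⦃p q⦄, p ≤ q → q ≤ c → η * (q - p) ≤ f p - f q
  right : ∀ ⦃p q⦄, c ≤ p → p ≤ q → η * (q - p) ≤ f q - f p

namespace StrictQuasiconvexWith_s14

variable {f : ℝ → ℝ} {η c p q r : ℝ}

lemma antitoneOn (hf : StrictQuasiconvexWith_s14 η c f) : AntitoneOn f (Iic c) := fun _ _ _ hq hpq =>
  sub_nonneg.1 ((mul_nonneg hf.pos.le (sub_nonneg.2 hpq)).trans (hf.left hpq hq))

lemma strictMonoOn (hf : StrictQuasiconvexWith_s14 η c f) : StrictMonoOn f (Ici c) :=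
  fun _ hp _ _ hpq => sub_pos.1 ((mul_pos hf.pos (sub_pos.2 hpq)).trans_le (hf.right hp hpq.le))

lemma apply_le (hf : StrictQuasiconvexWith_s14 η c f) (p : ℝ) : f c ≤ f p := by
  rcases le_total p c with hp | hp
  · exact hf.antitoneOn hp self_mem_Iic hp
  · exact hf.strictMonoOn.monotoneOn self_mem_Ici hp hp

lemma le_max (hf : StrictQuasiconvexWith_s14 η c f) (hpq : p ≤ q) (hqr : q ≤ r) :
    f q ≤ max (f p) (f r) := by
  rcases le_total q c with hq | hq
  · exact le_max_of_le_left (hf.antitoneOn (hpq.trans hq) hq hpq)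
  · exact le_max_of_le_right (hf.strictMonoOn.monotoneOn hq (hq.trans hqr) hqr)

lemma comp_neg (hf : StrictQuasiconvexWith_s14 η c f) :
    StrictQuasiconvexWith_s14 η (-c) (fun p => f (-p)) where
  pos := hf.pos
  left p q hpq hq := by linarith [hf.right (le_neg_of_le_neg hq) (neg_le_neg hpq)]
  right p q hp hpq := by linarith [hf.left (neg_le_neg hpq) (neg_le_of_neg_le hp)]

end StrictQuasiconvexWith_s14

lemma eventually_minimizer_le_of_lt {H : ℝ → ℝ → ℝ} {phat : ℝ → ℝ} {η l q : ℝ} (hH : Continuous ↿H)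
    (hqc : ∀ x, StrictQuasiconvexWith_s14 η (phat x) (H x)) (hq : phat l < q) :
    ∀ᶠ x in 𝓝 l, phat x ≤ q := by
  have hl : H l (phat l) < H l q := (hqc l).strictMonoOn self_mem_Ici hq.le hq
  have hcont : ∀ p, ContinuousAt (fun x => H x p) l := fun p =>
    (hH.comp (Continuous.prodMk_left p)).continuousAt
  filter_upwards [(hcont (phat l)).eventually_lt (hcont q) hl] with x hx
  by_contra! hlt
  exact hx.not_ge ((hqc x).antitoneOn (hq.le.trans hlt.le) hlt.le hq.le)

/-! ### The equation for the derivative near the left end of a component of `{a > 0}` -/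

/-- Just to the right of `l`, the function `a` is positive and at most `C * (x - l) ^ 2`; the point
`l` is then the left end of a component of `{a > 0}` at which `a` vanishes quadratically. -/
def QuadraticLeftEdge (a : ℝ → ℝ) (C l : ℝ) : Prop :=
  ∀ᶠ x in 𝓝[>] l, 0 < a x ∧ a x ≤ C * (x - l) ^ 2

/-- `w` satisfies `a w' + H(x, w) = lam` at `x`, solved for `w' x` (so this is meaningful only where
`a x ≠ 0`). It is the equation for `w = u'` when `a u'' + H(x, u') = lam`. -/
def IsDerivSolAt (a : ℝ → ℝ) (H : ℝ → ℝ → ℝ) (lam : ℝ) (w : ℝ → ℝ) (x : ℝ) : Prop :=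
  HasDerivAt w ((lam - H x (w x)) / a x) x

section Edge

variable {a f f' : ℝ → ℝ} {C l b m q δ : ℝ}

lemma monotoneOn_add_inv {c : ℝ} (hf : ∀ x ∈ Ioo l b, HasDerivAt f (f' x) x)
    (hf' : ∀ x ∈ Ioo l b, c / (x - l) ^ 2 ≤ f' x) :
    MonotoneOn (fun x => f x + c * (x - l)⁻¹) (Ioo l b) := by
  have hderiv : ∀ x ∈ Ioo l b,
      HasDerivAt (fun x => f x + c * (x - l)⁻¹) (f' x + c * (-1 / (x - l) ^ 2)) x := fun x hx =>
    (hf x hx).add ((((hasDerivAt_id' x).sub_const l).inv (sub_pos.2 hx.1).ne').const_mul c)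
  refine monotoneOn_of_deriv_nonneg (convex_Ioo l b)
    (fun x hx => (hderiv x hx).continuousAt.continuousWithinAt)
    (fun x hx => (hderiv x (interior_subset hx)).differentiableAt.differentiableWithinAt)
    fun x hx => ?_
  rw [(hderiv x (interior_subset hx)).deriv]
  have hc : c * (-1 / (x - l) ^ 2) = -(c / (x - l) ^ 2) := by ring
  rw [hc]
  exact sub_nonneg.2 (hf' x (interior_subset hx))

lemma tendsto_atBot_of_div_sq_le_deriv {c : ℝ} (hc : 0 < c)
    (hf : ∀ᶠ x in 𝓝[>] l, HasDerivAt f (f' x) x)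
    (hf' : ∀ᶠ x in 𝓝[>] l, c / (x - l) ^ 2 ≤ f' x) : Tendsto f (𝓝[>] l) atBot := by
  obtain ⟨b, hlb, hb⟩ := mem_nhdsGT_iff_exists_Ioo_subset.1 (hf.and hf')
  have hmono := monotoneOn_add_inv (fun x hx => (hb hx).1) (fun x hx => (hb hx).2)
  obtain ⟨y, hy⟩ := exists_between (mem_Ioi.1 hlb)
  have hinv : Tendsto (fun x => c * (x - l)⁻¹) (𝓝[>] l) atTop := by
    refine (tendsto_inv_nhdsGT_zero.comp ?_).const_mul_atTop hc
    refine tendsto_nhdsWithin_iff.2 ⟨?_, eventually_mem_nhdsWithin.mono fun _ hx =>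
      mem_Ioi.2 (sub_pos.2 hx)⟩
    exact ((continuous_sub_right l).tendsto' l 0 (sub_self l)).mono_left nhdsWithin_le_nhds
  refine tendsto_atBot_mono' _ ?_
    (tendsto_atBot_add_const_left _ (f y + c * (y - l)⁻¹) (tendsto_neg_atTop_atBot.comp hinv))
  filter_upwards [Ioo_mem_nhdsGT hy.1] with x hx
  simp only [Function.comp_apply]
  linarith [hmono ⟨hx.1, hx.2.trans hy.2⟩ hy hx.2.le]

lemma QuadraticLeftEdge.frequently_mul_deriv_lt (hl : QuadraticLeftEdge a C l) (hδ : 0 < δ)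
    (hf : ∀ᶠ x in 𝓝[>] l, HasDerivAt f (f' x) x) (hm : ∀ᶠ x in 𝓝[>] l, m ≤ f x) :
    ∃ᶠ x in 𝓝[>] l, a x * f' x < δ := by
  intro hnot
  have hC : 0 < C := by
    obtain ⟨x, ⟨hpos, hle⟩⟩ := hl.exists
    exact pos_of_mul_pos_left (hpos.trans_le hle) (sq_nonneg _)
  have hf' : ∀ᶠ x in 𝓝[>] l, δ / C / (x - l) ^ 2 ≤ f' x := by
    filter_upwards [hl, hnot] with x ⟨hpos, hle⟩ hx
    calc δ / C / (x - l) ^ 2 = δ / (C * (x - l) ^ 2) := div_div _ _ _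
      _ ≤ δ / a x := div_le_div_of_nonneg_left hδ.le hpos hle
      _ ≤ f' x := (div_le_iff₀' hpos).2 (not_lt.1 hx)
  have hbot := tendsto_atBot_of_div_sq_le_deriv (div_pos hδ hC) hf hf'
  obtain ⟨x, hx, hlt⟩ := (hm.and (hbot.eventually_lt_atBot m)).exists
  exact hx.not_gt hlt

lemma le_of_frequently_le_of_deriv_pos (hf : ∀ x ∈ Ioo l b, HasDerivAt f (f' x) x)
    (hpos : ∀ x ∈ Ioo l b, f x = q → 0 < f' x) (hfreq : ∃ᶠ x in 𝓝[>] l, q ≤ f x) :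
    ∀ x ∈ Ioo l b, q ≤ f x := by
  intro x hx
  obtain ⟨y, hqy, hy⟩ := (hfreq.and_eventually (Ioo_mem_nhdsGT hx.1)).exists
  have hIoo : ∀ t ∈ Icc y x, t ∈ Ioo l b := fun t ht =>
    ⟨hy.1.trans_le ht.1, ht.2.trans_lt hx.2⟩
  exact image_le_of_deriv_right_lt_deriv_boundary' (f := fun _ => q) (f' := fun _ => 0)
    continuousOn_const (fun t _ => hasDerivWithinAt_const t _ q) hqy
    (fun t ht => (hf t (hIoo t ht)).continuousAt.continuousWithinAt)
    (fun t ht => (hf t (hIoo t (Ico_subset_Icc_self ht))).hasDerivWithinAt)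
    (fun t ht heq => hpos t (hIoo t (Ico_subset_Icc_self ht)) heq.symm) ⟨hy.2.le, le_rfl⟩

end Edge

section DerivSol

variable {a : ℝ → ℝ} {H : ℝ → ℝ → ℝ} {phat w z w₁ w₂ : ℝ → ℝ} {C K η l b m q lam mu x : ℝ}

lemma eventually_forall_abs_sub_lt {s : Set ℝ} {ε : ℝ} (hH : Continuous ↿H) (hs : IsCompact s)
    (hε : 0 < ε) (l : ℝ) : ∀ᶠ x in 𝓝 l, ∀ p ∈ s, |H x p - H l p| < ε := by
  refine hs.eventually_forall_of_forall_eventually fun p _ => ?_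
  have hcont : Continuous fun z : ℝ × ℝ => |H z.1 z.2 - H l z.2| :=
    (hH.sub (hH.comp (continuous_const.prodMk continuous_snd))).abs
  exact hcont.continuousAt.eventually_lt_const (by simpa using hε)

lemma mul_slope_sub_slope (hx : 0 < a x) :
    a x * ((lam - H x (w x)) / a x - (mu - H x (z x)) / a x) =
      lam - mu - (H x (w x) - H x (z x)) := by
  field_simp
  ring

lemma QuadraticLeftEdge.le_level (hl : QuadraticLeftEdge a C l) (hH : Continuous ↿H)
    (hw : ∀ᶠ x in 𝓝[>] l, IsDerivSolAt a H lam w x) (hK : ∀ x, |w x| ≤ K)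
    (hm : ∀ p, m ≤ H l p) : m ≤ lam := by
  by_contra! hlt
  have hfreq := hl.frequently_mul_deriv_lt (half_pos (sub_pos.2 hlt)) (f := -w)
    (hw.mono fun x hx => HasDerivAt.neg hx)
    (Eventually.of_forall fun x => neg_le_neg (le_of_abs_le (hK x)))
  have hnear := (eventually_forall_abs_sub_lt hH isCompact_Icc (half_pos (sub_pos.2 hlt)) l
    (s := Icc (-K) K)).filter_mono (nhdsWithin_le_nhds (s := Ioi l))
  obtain ⟨x, hx, ⟨hpos, -⟩, hnear⟩ := (hfreq.and_eventually (hl.and hnear)).exists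
  rw [mul_neg, mul_div_cancel₀ _ hpos.ne'] at hx
  linarith [hm (w x), neg_lt_of_abs_lt (hnear (w x) (abs_le.1 (hK x)))]

lemma QuadraticLeftEdge.frequently_le (hl : QuadraticLeftEdge a C l) (hH : Continuous ↿H)
    (hqc : ∀ x, StrictQuasiconvexWith_s14 η (phat x) (H x))
    (hz : ∀ᶠ x in 𝓝[>] l, IsDerivSolAt a H mu z x)
    (hw : ∀ᶠ x in 𝓝[>] l, IsDerivSolAt a H lam w x) (hzK : ∀ x, |z x| ≤ K)
    (hzw : ∀ᶠ x in 𝓝[>] l, z x ≤ w x)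
    (hq : H l q - H l (phat l) < lam - mu) : ∃ᶠ x in 𝓝[>] l, q ≤ w x := by
  intro hnot
  obtain ⟨δ, hδ, hδq⟩ : ∃ δ > 0, H l q - H l (phat l) + 3 * δ = lam - mu :=
    ⟨(lam - mu - (H l q - H l (phat l))) / 3, by linarith, by ring⟩
  have hfreq := hl.frequently_mul_deriv_lt hδ (f := w - z) (m := 0)
    (by filter_upwards [hz, hw] with x hz hw using HasDerivAt.sub hw hz)
    (hzw.mono fun x => sub_nonneg.2)
  have hnear := (eventually_forall_abs_sub_lt hH (isCompact_Icc.insert q) hδ l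
    (s := insert q (Icc (-K) K))).filter_mono (nhdsWithin_le_nhds (s := Ioi l))
  obtain ⟨x, hx, ⟨hpos, -⟩, hnear, hzw, hwq⟩ :=
    (hfreq.and_eventually (hl.and (hnear.and (hzw.and hnot)))).exists
  rw [mul_slope_sub_slope hpos] at hx
  have hzx := neg_lt_of_abs_lt (hnear (z x) (mem_insert_of_mem _ (abs_le.1 (hzK x))))
  have hqx := lt_of_abs_lt (hnear q (mem_insert _ _))
  have hmin_l := (hqc l).apply_le
  rcases le_max_iff.1 ((hqc x).le_max hzw (not_le.1 hwq).le) with h | h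
  · linarith [hmin_l q]
  · linarith [hmin_l (z x)]

lemma QuadraticLeftEdge.eventually_le (hl : QuadraticLeftEdge a C l) (hH : Continuous ↿H)
    (hw : ∀ᶠ x in 𝓝[>] l, IsDerivSolAt a H lam w x) (hq : H l q < lam)
    (hfreq : ∃ᶠ x in 𝓝[>] l, q ≤ w x) : ∀ᶠ x in 𝓝[>] l, q ≤ w x := by
  have hqx : ∀ᶠ x in 𝓝[>] l, H x q < lam :=
    ((hH.comp (Continuous.prodMk_left q)).continuousAt.eventually_lt_const hq).filter_mono
      nhdsWithin_le_nhds
  obtain ⟨b, hlb, hb⟩ := mem_nhdsGT_iff_exists_Ioo_subset.1 (hl.and (hw.and hqx))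
  filter_upwards [Ioo_mem_nhdsGT hlb] with x hx
  refine le_of_frequently_le_of_deriv_pos (fun y hy => (hb hy).2.1) (fun y hy heq => ?_) hfreq x hx
  rw [heq]
  exact div_pos (sub_pos.2 (hb hy).2.2) (hb hy).1.1

lemma QuadraticLeftEdge.eventually_minimizer_le (hl : QuadraticLeftEdge a C l)
    (hH : Continuous ↿H) (hqc : ∀ x, StrictQuasiconvexWith_s14 η (phat x) (H x))
    (hz : ∀ᶠ x in 𝓝[>] l, IsDerivSolAt a H mu z x)
    (hw : ∀ᶠ x in 𝓝[>] l, IsDerivSolAt a H lam w x) (hzK : ∀ x, |z x| ≤ K)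
    (hzw : ∀ᶠ x in 𝓝[>] l, z x ≤ w x) (hlam : mu < lam) : ∀ᶠ x in 𝓝[>] l, phat x ≤ w x := by
  have hmin : H l (phat l) ≤ mu := hl.le_level hH hz hzK (hqc l).apply_le
  obtain ⟨q, hq, hHq⟩ : ∃ q > phat l, H l q < H l (phat l) + (lam - mu) := by
    have hcont : ContinuousAt (H l) (phat l) :=
      (hH.comp (Continuous.prodMk_right l)).continuousAt
    have hnear := hcont.eventually_lt_const (lt_add_of_pos_right _ (sub_pos.2 hlam))
    exact ((eventually_mem_nhdsWithin (s := Ioi (phat l))).and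
      (hnear.filter_mono nhdsWithin_le_nhds)).exists
  have hfreq := hl.frequently_le hH hqc hz hw hzK hzw (q := q) (by linarith)
  have hnear := (eventually_minimizer_le_of_lt hH hqc hq).filter_mono
    (nhdsWithin_le_nhds (s := Ioi l))
  filter_upwards [hnear, hl.eventually_le hH hw (by linarith) hfreq] with x using le_trans

/-- Wherever `w₁` exceeds `w₂` by `ε`, the difference has slope at most `-η ε / a`, so it would
blow up at the edge. -/
lemma QuadraticLeftEdge.le_of_minimizer_le (hl : QuadraticLeftEdge a C l)
    (hqc : ∀ x, StrictQuasiconvexWith_s14 η (phat x) (H x)) (ha : ∀ x ∈ Ioo l b, 0 < a x)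
    (hw₁ : ∀ x ∈ Ioo l b, IsDerivSolAt a H lam w₁ x)
    (hw₂ : ∀ x ∈ Ioo l b, IsDerivSolAt a H lam w₂ x)
    (hK₁ : ∀ x, |w₁ x| ≤ K) (hK₂ : ∀ x, |w₂ x| ≤ K) (hphat : ∀ x ∈ Ioo l b, phat x ≤ w₂ x)
    (hx : x ∈ Ioo l b) : w₁ x ≤ w₂ x := by
  have hη : 0 < η := (hqc x).pos
  have hderiv : ∀ y ∈ Ioo l b, HasDerivAt (w₂ - w₁) _ y := fun y hy => (hw₂ y hy).sub (hw₁ y hy)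
  have hslope : ∀ ε > 0, ∀ y ∈ Ioo l b, w₂ y - w₁ y ≤ -ε →
      η * ε ≤ a y * ((lam - H y (w₂ y)) / a y - (lam - H y (w₁ y)) / a y) := fun ε hε y hy hle => by
    rw [mul_slope_sub_slope (ha y hy)]
    linarith [(hqc y).right (hphat y hy) (by linarith : w₂ y ≤ w₁ y),
      mul_le_mul_of_nonneg_left (by linarith : ε ≤ w₁ y - w₂ y) hη.le]
  suffices h : ∀ ε > 0, -ε ≤ w₂ x - w₁ x from
    le_of_forall_pos_le_add fun ε hε => by linarith [h ε hε]
  intro ε hε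
  refine le_of_frequently_le_of_deriv_pos (f := w₂ - w₁) hderiv (fun y hy heq => ?_) ?_ x hx
  · exact pos_of_mul_pos_right ((mul_pos hη hε).trans_le (hslope ε hε y hy heq.le)) (ha y hy).le
  · have hIoo := Ioo_mem_nhdsGT (hx.1.trans hx.2)
    have hbdd : ∀ y, -(2 * K) ≤ w₂ y - w₁ y := fun y => by
      linarith [neg_le_of_abs_le (hK₂ y), le_of_abs_le (hK₁ y)]
    refine ((hl.frequently_mul_deriv_lt (mul_pos hη hε) (mem_of_superset hIoo hderiv)
      (Eventually.of_forall hbdd)).and_eventually hIoo).mono fun y hy => ?_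
    by_contra! hlt
    exact hy.1.not_ge (hslope ε hε y hy.2 hlt.le)

lemma IsDerivSolAt.eqOn_Icc {c d : ℝ} (ha : ContinuousOn a (Icc c d))
    (hpos : ∀ x ∈ Icc c d, 0 < a x) (hH : LocallyLipschitz ↿H)
    (hw₁ : ∀ x ∈ Icc c d, IsDerivSolAt a H lam w₁ x)
    (hw₂ : ∀ x ∈ Icc c d, IsDerivSolAt a H lam w₂ x)
    (hK₁ : ∀ x, |w₁ x| ≤ K) (hK₂ : ∀ x, |w₂ x| ≤ K) (h : w₁ c = w₂ c) :
    EqOn w₁ w₂ (Icc c d) := by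
  rcases lt_or_ge d c with hdc | hcd
  · simp [Icc_eq_empty hdc.not_ge]
  obtain ⟨L, hL⟩ := (hH.locallyLipschitzOn (s := Icc c d ×ˢ Icc (-K) K))
    |>.exists_lipschitzOnWith_of_compact (isCompact_Icc.prod isCompact_Icc)
  obtain ⟨y, hy, hmin⟩ := isCompact_Icc.exists_isMinOn (nonempty_Icc.2 hcd) ha
  refine ODE_solution_unique_of_mem_Icc_right (v := fun t p => (lam - H t p) / a t)
    (s := fun _ => Icc (-K) K) (K := (L / a y).toNNReal) (fun t ht => ?_)
    (fun t ht => (hw₁ t ht).continuousAt.continuousWithinAt)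
    (fun t ht => (hw₁ t (Ico_subset_Icc_self ht)).hasDerivWithinAt)
    (fun t _ => abs_le.1 (hK₁ t))
    (fun t ht => (hw₂ t ht).continuousAt.continuousWithinAt)
    (fun t ht => (hw₂ t (Ico_subset_Icc_self ht)).hasDerivWithinAt)
    (fun t _ => abs_le.1 (hK₂ t)) h
  have htI := Ico_subset_Icc_self ht
  have hat := hpos t htI
  refine LipschitzOnWith.of_dist_le_mul fun p hp q hq => ?_
  have hHpq : |H t q - H t p| ≤ L * |p - q| := by
    simpa [Function.HasUncurry.uncurry, Real.dist_eq, Prod.dist_eq, abs_sub_comm q p] using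
      hL.dist_le_mul (t, q) ⟨htI, hq⟩ (t, p) ⟨htI, hp⟩
  rw [Real.dist_eq, Real.dist_eq, Real.coe_toNNReal _ (div_nonneg L.coe_nonneg (hpos y hy).le),
    ← sub_div, sub_sub_sub_cancel_left, abs_div, abs_of_pos hat]
  calc |H t q - H t p| / a t ≤ L * |p - q| / a y :=
        div_le_div₀ (by positivity) hHpq (hpos y hy) (hmin htI)
    _ = L / a y * |p - q| := by ring

lemma QuadraticLeftEdge.eqOn (hl : QuadraticLeftEdge a C l) (ha : ContinuousOn a (Ioo l b))
    (hpos : ∀ x ∈ Ioo l b, 0 < a x) (hH : LocallyLipschitz ↿H)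
    (hqc : ∀ x, StrictQuasiconvexWith_s14 η (phat x) (H x))
    (hw₁ : ∀ x ∈ Ioo l b, IsDerivSolAt a H lam w₁ x)
    (hw₂ : ∀ x ∈ Ioo l b, IsDerivSolAt a H lam w₂ x)
    (hK₁ : ∀ x, |w₁ x| ≤ K) (hK₂ : ∀ x, |w₂ x| ≤ K)
    (hphat₁ : ∀ᶠ x in 𝓝[>] l, phat x ≤ w₁ x) (hphat₂ : ∀ᶠ x in 𝓝[>] l, phat x ≤ w₂ x) :
    EqOn w₁ w₂ (Ioo l b) := by
  intro x hx
  obtain ⟨r, hlr, hr⟩ := mem_nhdsGT_iff_exists_Ioo_subset.1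
    (hphat₁.and (hphat₂.and (Ioo_mem_nhdsGT hx.1)))
  obtain ⟨c, hc⟩ := exists_between (mem_Ioi.1 hlr)
  have hcx : c < x := (hr hc).2.2.2
  have hrb : ∀ y ∈ Ioo l r, y ∈ Ioo l b := fun y hy => ⟨hy.1, (hr hy).2.2.2.trans hx.2⟩
  have hIcc : Icc c x ⊆ Ioo l b := fun y hy => ⟨hc.1.trans_le hy.1, hy.2.trans_lt hx.2⟩
  have hwc : w₁ c = w₂ c := le_antisymm
    (hl.le_of_minimizer_le hqc (fun y hy => hpos y (hrb y hy)) (fun y hy => hw₁ y (hrb y hy))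
      (fun y hy => hw₂ y (hrb y hy)) hK₁ hK₂ (fun y hy => (hr hy).2.1) hc)
    (hl.le_of_minimizer_le hqc (fun y hy => hpos y (hrb y hy)) (fun y hy => hw₂ y (hrb y hy))
      (fun y hy => hw₁ y (hrb y hy)) hK₂ hK₁ (fun y hy => (hr hy).1) hc)
  exact IsDerivSolAt.eqOn_Icc (ha.mono hIcc) (fun y hy => hpos y (hIcc hy)) hH
    (fun y hy => hw₁ y (hIcc hy)) (fun y hy => hw₂ y (hIcc hy)) hK₁ hK₂ hwc ⟨hcx.le, le_rfl⟩

end DerivSol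

/-! ### Solutions on the increasing branch of the Hamiltonian -/

/-- A continuous nonnegative coefficient that is dominated by the parabola `C * (x - y) ^ 2` around
each of its zeros `y`. -/
structure QuadraticallyDegenerate (a : ℝ → ℝ) (C : ℝ) : Prop where
  nonneg : ∀ x, 0 ≤ a x
  continuous : Continuous a
  le_sq : ∀ ⦃x y⦄, a y = 0 → a x ≤ C * (x - y) ^ 2

/-- `u'` lies on the increasing branch of `H x`, that is to the right of its minimizer `phat x`, at
almost every zero `x` of `a` and just to the right of every left end of a component of
`{a > 0}`. -/
structure OnIncreasingBranch (a phat u : ℝ → ℝ) : Prop where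
  zero : ∀ᵐ x, a x = 0 → phat x ≤ deriv u x
  edge : ∀ l, a l = 0 → (∀ᶠ x in 𝓝[>] l, 0 < a x) → ∀ᶠ x in 𝓝[>] l, phat x ≤ deriv u x

lemma QuadraticallyDegenerate.comp_neg {a : ℝ → ℝ} {C : ℝ} (ha : QuadraticallyDegenerate a C) :
    QuadraticallyDegenerate (fun x => a (-x)) C where
  nonneg x := ha.nonneg (-x)
  continuous := ha.continuous.comp continuous_neg
  le_sq x y hy := (ha.le_sq hy).trans_eq (by ring)

lemma QuadraticallyDegenerate.quadraticLeftEdge {a : ℝ → ℝ} {C l : ℝ}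
    (ha : QuadraticallyDegenerate a C) (hl : a l = 0) (hpos : ∀ᶠ x in 𝓝[>] l, 0 < a x) :
    QuadraticLeftEdge a C l :=
  hpos.mono fun _ hx => ⟨hx, ha.le_sq hl⟩

lemma exists_mem_Ioo_of_exists_zero {a : ℝ → ℝ} {x : ℝ} (ha : Continuous a)
    (ha₀ : ∀ y, 0 ≤ a y) (hx : 0 < a x) (hleft : ∃ l ≤ x, a l = 0) :
    ∃ l b, a l = 0 ∧ x ∈ Ioo l b ∧ ∀ y ∈ Ioo l b, 0 < a y := by
  obtain ⟨l₀, hl₀x, hl₀⟩ := hleft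
  obtain ⟨l, ⟨⟨hl₀l, hlx⟩, hl⟩, hmax⟩ :=
    (isCompact_Icc.inter_right (isClosed_singleton.preimage ha)).exists_isGreatest
      ⟨l₀, ⟨le_rfl, hl₀x⟩, hl₀⟩
  obtain ⟨b, hxb, hb⟩ := mem_nhdsGE_iff_exists_Ico_subset.1
    ((ha.continuousAt.eventually_const_lt hx).filter_mono nhdsWithin_le_nhds)
  refine ⟨l, b, hl, ⟨hlx.lt_of_ne ?_, hxb⟩, fun y hy => ?_⟩
  · rintro rfl
    exact hx.ne' hl
  rcases le_or_gt x y with hxy | hyx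
  · exact hb ⟨hxy, hy.2⟩
  · exact (ha₀ y).lt_of_ne' fun hay =>
      (hmax ⟨⟨hl₀l.trans hy.1.le, hyx.le⟩, hay⟩).not_gt hy.1

lemma le_of_ae_le_of_continuousAt {f g : ℝ → ℝ} {x : ℝ} (h : ∀ᵐ y, f y ≤ g y)
    (hf : ContinuousAt f x) (hg : ContinuousAt g x) : f x ≤ g x := by
  by_contra! hlt
  obtain ⟨y, (hgf : g y < f y), (hfg : f y ≤ g y)⟩ :=
    mem_closure_iff_nhds.1 (Measure.dense_of_ae h x) _ (hg.eventually_lt hf hlt)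
  exact hfg.not_gt hgf

section Branch

variable {a phat u v u₁ u₂ : ℝ → ℝ} {H : ℝ → ℝ → ℝ} {C η lam mu x : ℝ} {K L : ℝ≥0}

lemma ViscSolOn.isDerivSolAt (hu : ViscSolOn a H lam univ u) (hK : LipschitzWith K u)
    (ha : Continuous a) (hH : Continuous ↿H) (hx : 0 < a x) : IsDerivSolAt a H lam (deriv u) x :=
  hu.hasDerivAt_deriv hK ha hH hx

lemma ViscSolOn.ae_eq_of_eq_zero (hu : ViscSolOn a H lam univ u) (hK : LipschitzWith K u)
    (ha : QuadraticallyDegenerate a C) (hH : Continuous ↿H) :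
    ∀ᵐ x, a x = 0 → H x (deriv u x) = lam := by
  filter_upwards [hK.ae_differentiableAt_real] with x hdiff hx
  exact hu.eq_of_hasDerivAt hK.continuous hH (fun _ => ha.le_sq hx) hdiff.hasDerivAt

lemma ViscSolOn.onIncreasingBranch (hu : ViscSolOn a H lam univ u) (hKu : LipschitzWith K u)
    (hv : ViscSolOn a H mu univ v) (hKv : LipschitzWith L v) (ha : QuadraticallyDegenerate a C)
    (hH : Continuous ↿H) (hqc : ∀ x, StrictQuasiconvexWith_s14 η (phat x) (H x)) (hlam : mu < lam)
    (hvu : ∀ᵐ x, deriv v x ≤ deriv u x) : OnIncreasingBranch a phat u where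
  zero := by
    filter_upwards [hu.ae_eq_of_eq_zero hKu ha hH, hv.ae_eq_of_eq_zero hKv ha hH, hvu]
      with x hu hv hvu hx
    by_contra! hlt
    have hle := (hqc x).antitoneOn (hvu.trans hlt.le) hlt.le hvu
    rw [hu hx, hv hx] at hle
    exact hle.not_gt hlam
  edge l hl hpos := by
    have hu' := hpos.mono fun x => hu.isDerivSolAt hKu ha.continuous hH
    have hv' := hpos.mono fun x => hv.isDerivSolAt hKv ha.continuous hH
    refine (ha.quadraticLeftEdge hl hpos).eventually_minimizer_le hH hqc hv' hu'
      (fun x => norm_deriv_le_of_lipschitz hKv) ?_ hlam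
    filter_upwards [hu', hv'] with x hux hvx
    exact le_of_ae_le_of_continuousAt hvu hvx.continuousAt hux.continuousAt

lemma OnIncreasingBranch.deriv_eq_of_pos (hb₁ : OnIncreasingBranch a phat u₁)
    (hb₂ : OnIncreasingBranch a phat u₂) (hu₁ : ViscSolOn a H lam univ u₁)
    (hu₂ : ViscSolOn a H lam univ u₂) (hK₁ : LipschitzWith K u₁) (hK₂ : LipschitzWith K u₂)
    (ha : QuadraticallyDegenerate a C) (hleft : ∃ l ≤ x, a l = 0) (hH : LocallyLipschitz ↿H)
    (hqc : ∀ x, StrictQuasiconvexWith_s14 η (phat x) (H x)) (hx : 0 < a x) :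
    deriv u₁ x = deriv u₂ x := by
  obtain ⟨l, b, hl, hxlb, hpos⟩ := exists_mem_Ioo_of_exists_zero ha.continuous ha.nonneg hx hleft
  have hpos' : ∀ᶠ y in 𝓝[>] l, 0 < a y :=
    mem_of_superset (Ioo_mem_nhdsGT (hxlb.1.trans hxlb.2)) hpos
  exact (ha.quadraticLeftEdge hl hpos').eqOn ha.continuous.continuousOn hpos hH hqc
    (fun y hy => hu₁.isDerivSolAt hK₁ ha.continuous hH.continuous (hpos y hy))
    (fun y hy => hu₂.isDerivSolAt hK₂ ha.continuous hH.continuous (hpos y hy))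
    (fun y => norm_deriv_le_of_lipschitz hK₁) (fun y => norm_deriv_le_of_lipschitz hK₂)
    (hb₁.edge l hl hpos') (hb₂.edge l hl hpos') hxlb

lemma OnIncreasingBranch.ae_deriv_eq (hb₁ : OnIncreasingBranch a phat u₁)
    (hb₂ : OnIncreasingBranch a phat u₂) (hu₁ : ViscSolOn a H lam univ u₁)
    (hu₂ : ViscSolOn a H lam univ u₂) (hK₁ : LipschitzWith K u₁) (hK₂ : LipschitzWith K u₂)
    (ha : QuadraticallyDegenerate a C) (hleft : ∀ x, 0 < a x → ∃ l ≤ x, a l = 0)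
    (hH : LocallyLipschitz ↿H) (hqc : ∀ x, StrictQuasiconvexWith_s14 η (phat x) (H x)) :
    ∀ᵐ x, deriv u₁ x = deriv u₂ x := by
  filter_upwards [hb₁.zero, hb₂.zero, hu₁.ae_eq_of_eq_zero hK₁ ha hH.continuous,
    hu₂.ae_eq_of_eq_zero hK₂ ha hH.continuous] with x hp₁ hp₂ hH₁ hH₂
  rcases (ha.nonneg x).eq_or_lt with hx | hx
  · exact (hqc x).strictMonoOn.injOn (hp₁ hx.symm) (hp₂ hx.symm)
      ((hH₁ hx.symm).trans (hH₂ hx.symm).symm)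
  · exact hb₁.deriv_eq_of_pos hb₂ hu₁ hu₂ hK₁ hK₂ ha (hleft x hx) hH hqc hx

lemma exists_sub_eq_const_of_ae_deriv_eq (hK₁ : LipschitzWith K u₁) (hK₂ : LipschitzWith L u₂)
    (h : ∀ᵐ x, deriv u₁ x = deriv u₂ x) : ∃ c, ∀ x, u₁ x - u₂ x = c := by
  refine ⟨u₁ 0 - u₂ 0, fun x => ?_⟩
  have hac : AbsolutelyContinuousOnInterval (fun x => u₁ x - u₂ x) 0 x :=
    (hK₁.sub hK₂).lipschitzOnWith.absolutelyContinuousOnInterval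
  have hderiv : ∀ᵐ y, HasDerivAt (fun x => u₁ x - u₂ x) 0 y := by
    filter_upwards [h, hK₁.ae_differentiableAt_real, hK₂.ae_differentiableAt_real] with y hy h₁ h₂
    simpa [hy] using h₁.hasDerivAt.fun_sub h₂.hasDerivAt
  obtain ⟨c, hc⟩ := hac.const_of_ae_hasDerivAt_zero (hderiv.mono fun y hy _ => hy)
  rw [hc x right_mem_uIcc, hc 0 left_mem_uIcc]

end Branch

section Comparison

variable {a phat u₁ u₂ v₁ v₂ : ℝ → ℝ} {H : ℝ → ℝ → ℝ} {C η lam mu₁ mu₂ : ℝ}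

lemma exists_sub_eq_const_of_ae_deriv_ge (ha : QuadraticallyDegenerate a C)
    (hleft : ∀ x, 0 < a x → ∃ l ≤ x, a l = 0) (hH : LocallyLipschitz ↿H)
    (hco : QuadraticallyCoercive a H) (hqc : ∀ x, StrictQuasiconvexWith_s14 η (phat x) (H x))
    (hmu₁ : mu₁ < lam) (hmu₂ : mu₂ < lam)
    (hu₁c : Continuous u₁) (hu₂c : Continuous u₂) (hv₁c : Continuous v₁) (hv₂c : Continuous v₂)
    (hu₁ : ViscSolOn a H lam univ u₁) (hu₂ : ViscSolOn a H lam univ u₂)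
    (hv₁ : ViscSolOn a H mu₁ univ v₁) (hv₂ : ViscSolOn a H mu₂ univ v₂)
    (h₁ : ∀ᵐ x, deriv v₁ x ≤ deriv u₁ x) (h₂ : ∀ᵐ x, deriv v₂ x ≤ deriv u₂ x) :
    ∃ c, ∀ x, u₁ x - u₂ x = c := by
  obtain ⟨K₁, hK₁⟩ := hu₁.2.exists_lipschitzWith ha.nonneg hco hu₁c
  obtain ⟨K₂, hK₂⟩ := hu₂.2.exists_lipschitzWith ha.nonneg hco hu₂c
  obtain ⟨L₁, hL₁⟩ := hv₁.2.exists_lipschitzWith ha.nonneg hco hv₁c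
  obtain ⟨L₂, hL₂⟩ := hv₂.2.exists_lipschitzWith ha.nonneg hco hv₂c
  have hb₁ := hu₁.onIncreasingBranch hK₁ hv₁ hL₁ ha hH.continuous hqc hmu₁ h₁
  have hb₂ := hu₂.onIncreasingBranch hK₂ hv₂ hL₂ ha hH.continuous hqc hmu₂ h₂
  have hK₁' := hK₁.weaken (le_max_left K₁ K₂)
  have hK₂' := hK₂.weaken (le_max_right K₁ K₂)
  exact exists_sub_eq_const_of_ae_deriv_eq hK₁ hK₂
    (hb₁.ae_deriv_eq hb₂ hu₁ hu₂ hK₁' hK₂' ha hleft hH hqc)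

lemma QuadraticallyCoercive.comp_neg (hco : QuadraticallyCoercive a H) :
    QuadraticallyCoercive (fun x => a (-x)) (fun x p => H (-x) (-p)) := fun lam => by
  obtain ⟨c, hc, M, hM, h⟩ := hco lam
  refine ⟨c, hc, M, hM, fun x p hp => ?_⟩
  simpa using h (-x) (-p) (by simpa using hp)

lemma ae_deriv_comp_neg_le {u v : ℝ → ℝ} (h : ∀ᵐ x, deriv u x ≤ deriv v x) :
    ∀ᵐ x, deriv (fun y => v (-y)) x ≤ deriv (fun y => u (-y)) x := by
  have hneg : Tendsto (fun x : ℝ => -x) (ae volume) (ae volume) :=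
    (Measure.measurePreserving_neg volume).quasiMeasurePreserving.tendsto_ae
  filter_upwards [hneg.eventually h] with x hx
  simpa only [deriv_comp_neg, neg_le_neg_iff] using hx

lemma exists_sub_eq_const_of_ae_deriv_le (ha : QuadraticallyDegenerate a C)
    (hright : ∀ x, 0 < a x → ∃ r ≥ x, a r = 0) (hH : LocallyLipschitz ↿H)
    (hco : QuadraticallyCoercive a H) (hqc : ∀ x, StrictQuasiconvexWith_s14 η (phat x) (H x))
    (hmu₁ : mu₁ < lam) (hmu₂ : mu₂ < lam)
    (hu₁c : Continuous u₁) (hu₂c : Continuous u₂) (hv₁c : Continuous v₁) (hv₂c : Continuous v₂)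
    (hu₁ : ViscSolOn a H lam univ u₁) (hu₂ : ViscSolOn a H lam univ u₂)
    (hv₁ : ViscSolOn a H mu₁ univ v₁) (hv₂ : ViscSolOn a H mu₂ univ v₂)
    (h₁ : ∀ᵐ x, deriv u₁ x ≤ deriv v₁ x) (h₂ : ∀ᵐ x, deriv u₂ x ≤ deriv v₂ x) :
    ∃ c, ∀ x, u₁ x - u₂ x = c := by
  have hleft : ∀ x, 0 < a (-x) → ∃ l ≤ x, a (-l) = 0 := fun x hx => by
    obtain ⟨r, hr, har⟩ := hright (-x) hx
    exact ⟨-r, neg_le.2 hr, by rwa [neg_neg]⟩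
  have hneg : LocallyLipschitz fun z : ℝ × ℝ => -z :=
    LipschitzWith.id.neg.locallyLipschitz
  obtain ⟨c, hc⟩ := exists_sub_eq_const_of_ae_deriv_ge (H := fun x p => H (-x) (-p))
    (phat := fun x => -phat (-x)) ha.comp_neg hleft (hH.comp hneg) hco.comp_neg
    (fun x => (hqc (-x)).comp_neg) hmu₁ hmu₂
    (hu₁c.comp continuous_neg) (hu₂c.comp continuous_neg) (hv₁c.comp continuous_neg)
    (hv₂c.comp continuous_neg) hu₁.comp_neg hu₂.comp_neg hv₁.comp_neg hv₂.comp_neg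
    (ae_deriv_comp_neg_le h₁) (ae_deriv_comp_neg_le h₂)
  exact ⟨c, fun x => by simpa using hc (-x)⟩

end Comparison

/-! ### The coefficient and the Hamiltonian -/

section Coefficient

variable {a : ℝ → ℝ} {x : ℝ}

lemma quadraticallyDegenerate_of_lipschitzWith_sqrt {κ : ℝ≥0} (ha : ∀ x, 0 ≤ a x)
    (hκ : LipschitzWith κ fun x => √(a x)) : QuadraticallyDegenerate a (κ ^ 2) where
  nonneg := ha
  continuous := by
    have hsq : (fun x => √(a x) ^ 2) = a := funext fun x => Real.sq_sqrt (ha x)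
    exact hsq ▸ hκ.continuous.pow 2
  le_sq x y hy := by
    have hsqrt : √(a x) ≤ κ * |x - y| := by
      simpa [hy, Real.dist_eq, abs_of_nonneg (Real.sqrt_nonneg _)] using hκ.dist_le_mul x y
    calc a x = √(a x) ^ 2 := (Real.sq_sqrt (ha x)).symm
      _ ≤ (κ * |x - y|) ^ 2 := pow_le_pow_left₀ (Real.sqrt_nonneg _) hsqrt 2
      _ = κ ^ 2 * (x - y) ^ 2 := by rw [mul_pow, sq_abs]

lemma exists_zero_le_of_isBounded_component (ha : ∀ x, 0 ≤ a x)
    (hb : Bornology.IsBounded (connectedComponentIn {y | 0 < a y} x)) : ∃ l ≤ x, a l = 0 := by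
  by_contra! hne
  have hsub : Iic x ⊆ connectedComponentIn {y | 0 < a y} x :=
    isPreconnected_Iic.subset_connectedComponentIn self_mem_Iic
      fun y hy => (ha y).lt_of_ne' (hne y hy)
  exact not_bddBelow_Iic x (hb.subset hsub).bddBelow

lemma exists_zero_ge_of_isBounded_component (ha : ∀ x, 0 ≤ a x)
    (hb : Bornology.IsBounded (connectedComponentIn {y | 0 < a y} x)) : ∃ r ≥ x, a r = 0 := by
  by_contra! hne
  have hsub : Ici x ⊆ connectedComponentIn {y | 0 < a y} x :=
    isPreconnected_Ici.subset_connectedComponentIn self_mem_Ici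
      fun y hy => (ha y).lt_of_ne' (hne y hy)
  exact not_bddAbove_Ici x (hb.subset hsub).bddAbove

end Coefficient

section Hamiltonian

variable {a phat : ℝ → ℝ} {H : ℝ → ℝ → ℝ} {α0 α1 γ η : ℝ}

lemma HamClass.abs_sub_le_of_abs_le_s14 {R x y p q : ℝ} (hH : HamClass α0 α1 γ H) (hα1 : 0 ≤ α1)
    (hγ : 1 ≤ γ) (hp : |p| ≤ R) (hq : |q| ≤ R) :
    |H x p - H y q| ≤ α1 * (R + R + 1) ^ (γ - 1) * |p - q| + α1 * (R ^ γ + 1) * |x - y| := by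
  obtain ⟨-, -, hlip, hlip'⟩ := hH
  calc |H x p - H y q| ≤ |H x p - H x q| + |H x q - H y q| := abs_sub_le _ _ _
    _ ≤ α1 * (|p| + |q| + 1) ^ (γ - 1) * |p - q| + α1 * (|q| ^ γ + 1) * |x - y| :=
      add_le_add (hlip x p q) (hlip' x y q)
    _ ≤ α1 * (R + R + 1) ^ (γ - 1) * |p - q| + α1 * (R ^ γ + 1) * |x - y| := by
      have hpow : (|p| + |q| + 1) ^ (γ - 1) ≤ (R + R + 1) ^ (γ - 1) :=
        Real.rpow_le_rpow (by positivity) (by linarith) (by linarith)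
      have hpow' : |q| ^ γ ≤ R ^ γ := Real.rpow_le_rpow (abs_nonneg q) hq (by linarith)
      gcongr

lemma HamClass.locallyLipschitz (hH : HamClass α0 α1 γ H) (hα1 : 0 ≤ α1) (hγ : 1 ≤ γ) :
    LocallyLipschitz ↿H := by
  rintro ⟨x₀, p₀⟩
  set R := |p₀| + 1
  have hbound : ∀ z ∈ Metric.ball (x₀, p₀) 1, |z.2| ≤ R := fun z hz => by
    have hz₂ : |z.2 - p₀| < 1 := (le_max_right _ _).trans_lt hz
    linarith [abs_sub_abs_le_abs_sub z.2 p₀]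
  refine ⟨_, Metric.ball (x₀, p₀) 1, Metric.ball_mem_nhds _ one_pos,
    LipschitzOnWith.of_dist_le' (K := α1 * (R + R + 1) ^ (γ - 1) + α1 * (R ^ γ + 1))
      fun z hz t ht => ?_⟩
  have hx : |z.1 - t.1| ≤ dist z t := le_max_left _ _
  have hp : |z.2 - t.2| ≤ dist z t := le_max_right _ _
  calc |H z.1 z.2 - H t.1 t.2|
      ≤ α1 * (R + R + 1) ^ (γ - 1) * |z.2 - t.2| + α1 * (R ^ γ + 1) * |z.1 - t.1| :=
        hH.abs_sub_le_of_abs_le_s14 hα1 hγ (hbound z hz) (hbound t ht)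
    _ ≤ α1 * (R + R + 1) ^ (γ - 1) * dist z t + α1 * (R ^ γ + 1) * dist z t := by gcongr
    _ = (α1 * (R + R + 1) ^ (γ - 1) + α1 * (R ^ γ + 1)) * dist z t := by ring

lemma HamClass.quadraticallyCoercive (hH : HamClass α0 α1 γ H) (hα0 : 0 < α0) (hγ : 2 ≤ γ)
    (ha : ∀ x, a x ≤ 1) : QuadraticallyCoercive a H := by
  intro lam
  set B := |lam| + 1 / α0 + 1
  refine ⟨α0 / 2, by positivity, max 1 (2 * B / α0), by positivity, fun x p hp => ?_⟩
  have hp₁ : 1 ≤ |p| := (le_max_left _ _).trans hp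
  have hB' : B ≤ α0 / 2 * |p| := by
    linarith [(div_le_iff₀' hα0).1 ((le_max_right _ _).trans hp)]
  have hpow : p ^ 2 ≤ |p| ^ γ := by
    simpa using Real.rpow_le_rpow_of_exponent_le hp₁ hγ
  have hle_sq : |p| ≤ p ^ 2 := by
    simpa using le_self_pow₀ hp₁ two_ne_zero
  calc lam + α0 / 2 * a x * p ^ 2 ≤ lam + α0 / 2 * 1 * p ^ 2 := by gcongr; exact ha x
    _ < B - 1 / α0 + α0 / 2 * p ^ 2 := by linarith [le_abs_self lam]
    _ ≤ α0 / 2 * p ^ 2 - 1 / α0 + α0 / 2 * p ^ 2 := by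
      linarith [mul_le_mul_of_nonneg_left hle_sq (half_pos hα0).le]
    _ ≤ α0 * |p| ^ γ - 1 / α0 := by linarith [mul_le_mul_of_nonneg_left hpow hα0.le]
    _ ≤ H x p := hH.1 x p

lemma HamSqc.strictQuasiconvexWith_s14 (hH : HamSqc α0 α1 γ η H phat) (hη : 0 < η) (x : ℝ) :
    StrictQuasiconvexWith_s14 η (phat x) (H x) := by
  obtain ⟨-, -, -, hleft, hright⟩ := hH
  refine ⟨hη, fun p q hpq hq => ?_, fun p q hp hpq => ?_⟩ <;> rcases hpq.eq_or_lt with rfl | hlt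
  · simp
  · simpa [abs_sub_comm p q, abs_of_pos (sub_pos.2 hlt)] using hleft x p q hlt hq
  · simp
  · simpa [abs_sub_comm p q, abs_of_pos (sub_pos.2 hlt)] using hright x p q hp hlt

end Hamiltonian

theorem statement_14_general {a : ℝ → ℝ} {H : ℝ → ℝ → ℝ} {phat : ℝ → ℝ} {κ : ℝ≥0} {η : ℝ}
    (ha : ∀ x, 0 ≤ a x) (hκ : LipschitzWith κ fun x => √(a x))
    (hbdd : ∀ x, 0 < a x → Bornology.IsBounded (connectedComponentIn {y | 0 < a y} x))
    (hH : LocallyLipschitz ↿H) (hco : QuadraticallyCoercive a H)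
    (hqc : ∀ x, StrictQuasiconvexWith_s14 η (phat x) (H x))
    {lam mu₁ mu₂ : ℝ} (hmu₁ : mu₁ < lam) (hmu₂ : mu₂ < lam) {u₁ u₂ v₁ v₂ : ℝ → ℝ}
    (hu₁c : Continuous u₁) (hu₂c : Continuous u₂) (hv₁c : Continuous v₁) (hv₂c : Continuous v₂)
    (hu₁ : ViscSolOn a H lam univ u₁) (hu₂ : ViscSolOn a H lam univ u₂)
    (hv₁ : ViscSolOn a H mu₁ univ v₁) (hv₂ : ViscSolOn a H mu₂ univ v₂) :
    ((∀ᵐ x, deriv v₁ x ≤ deriv u₁ x) → (∀ᵐ x, deriv v₂ x ≤ deriv u₂ x) →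
      ∃ c, ∀ x, u₁ x - u₂ x = c) ∧
    ((∀ᵐ x, deriv u₁ x ≤ deriv v₁ x) → (∀ᵐ x, deriv u₂ x ≤ deriv v₂ x) →
      ∃ c, ∀ x, u₁ x - u₂ x = c) := by
  have hdeg := quadraticallyDegenerate_of_lipschitzWith_sqrt ha hκ
  exact ⟨exists_sub_eq_const_of_ae_deriv_ge hdeg
      (fun x hx => exists_zero_le_of_isBounded_component ha (hbdd x hx)) hH hco hqc hmu₁ hmu₂
      hu₁c hu₂c hv₁c hv₂c hu₁ hu₂ hv₁ hv₂,
    exists_sub_eq_const_of_ae_deriv_le hdeg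
      (fun x hx => exists_zero_ge_of_isBounded_component ha (hbdd x hx)) hH hco hqc hmu₁ hmu₂
      hu₁c hu₂c hv₁c hv₂c hu₁ hu₂ hv₁ hv₂⟩

/-- Theorem `appC teo uniqueness`: let `lam > λ₀`, `u1, u2` viscosity
solutions at level `lam` and `v1, v2` viscosity solutions at level `λ₀`.  If `uᵢ' ≥ vᵢ'`
a.e. on `ℝ` for each `i`, then `u1 - u2` is constant; likewise if `uᵢ' ≤ vᵢ'` a.e. -/
theorem statement_14
    (a : ℝ → ℝ) (H : ℝ → ℝ → ℝ) (phat : ℝ → ℝ)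
    (κ α0 α1 γ η : ℝ)
    (harange : ∀ x, a x ∈ Set.Icc (0:ℝ) 1)
    (hκ : 0 < κ) (hA2 : ∀ x y : ℝ, |Real.sqrt (a x) - Real.sqrt (a y)| ≤ κ * |x - y|)
    (hA1' : CondA1' a)
    (hα0 : 0 < α0) (hα1 : 0 < α1) (hγ : 2 < γ) (hη : 0 < η)
    (hH : HamSqc α0 α1 γ η H phat)
    (lam0 : ℝ) (hlam0 : lam0 = CriticalValue a H)
    (lam : ℝ) (hlam : lam0 < lam)
    (u1 u2 v1 v2 : ℝ → ℝ)
    (hu1c : Continuous u1) (hu2c : Continuous u2) (hv1c : Continuous v1)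
    (hv2c : Continuous v2)
    (hu1 : ViscSolOn a H lam Set.univ u1) (hu2 : ViscSolOn a H lam Set.univ u2)
    (hv1 : ViscSolOn a H lam0 Set.univ v1) (hv2 : ViscSolOn a H lam0 Set.univ v2) :
    ((∀ᵐ x ∂(volume : Measure ℝ), deriv v1 x ≤ deriv u1 x) →
     (∀ᵐ x ∂(volume : Measure ℝ), deriv v2 x ≤ deriv u2 x) →
      ∃ c : ℝ, ∀ x : ℝ, u1 x - u2 x = c) ∧
    ((∀ᵐ x ∂(volume : Measure ℝ), deriv u1 x ≤ deriv v1 x) →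
     (∀ᵐ x ∂(volume : Measure ℝ), deriv u2 x ≤ deriv v2 x) →
      ∃ c : ℝ, ∀ x : ℝ, u1 x - u2 x = c) := by
  exact statement_14_general (fun x => (harange x).1) (LipschitzWith.of_dist_le' hA2) hA1'.2
    (hH.1.locallyLipschitz hα1.le (by linarith))
    (hH.1.quadraticallyCoercive hα0 hγ.le fun x => (harange x).2)
    (hH.strictQuasiconvexWith_s14 hη) hlam hlam hu1c hu2c hv1c hv2c hu1 hu2 hv1 hv2
end
end
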